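/- arXiv:2511.20747 — 3 statements merged into one kernel-verified Lean document; each statement's English description precedes it below -/
import Mathlib

section
/- Fix a constant c with 0 < c < 2. Then there exists a constant C > 0 (depending only on c) such that the following holds for all positive integers n_A, n_B, n_C, all integers m with 1 ≤ m ≤ min(n_A, n_B), and all real h with δ := h² − 2^(−2m) > 0. Set d_A = 2^{n_A}, d_B = 2^{n_B}, d_C = 2^{n_C}, d = d_A·d_B·d_C, let ψ = U e₁ be a Haar random state on ℂ^{d_A}⊗ℂ^{d_B}⊗ℂ^{d_C}, and let ρ_AB be its reduced density matrix on the first two factors. Let Π_m be the orthogonal projection onto m EPR pairs between the first m qubits of A and the first m qubits of B (tensored with the identity on the remaining qubits of A and B). Then the Haar probability of the (closed, hence measurable) set of unitaries U ∈ U(d) for which there exist unitaries U_A ∈ U(d_A) and U_B ∈ U(d_B) with Tr[(U_A⊗U_B) ρ_AB (U_A⊗U_B)† Π_m] ≥ h² satisfies: log Prob ≤ −c·δ²·d + C·(d_A² + d_B²)·(1 + log(1/δ)). -/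
/-!
Theorem 3 of the paper (precise LU-distillation no-go for tripartite Haar random
states): for a Haar random state `ψ = U e₁` on `ℂ^{2^nA} ⊗ ℂ^{2^nB} ⊗ ℂ^{2^nC}`,
the probability that some local unitary `U_A ⊗ U_B` brings the reduced state
`ρ_AB` to have overlap at least `h²` with the projector onto `m` EPR pairs is
bounded by `exp(-c δ² d + C (d_A² + d_B²)(1 + log(1/δ)))` where
`δ = h² - 2^{-2m}`.
-/

open MeasureTheory Matrix
open scoped Kronecker Classical

noncomputable section

/-- `ℂ²` tensor factors: a basis index for `(ℂ²)^{⊗ n}`. -/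
abbrev QubitIdx (n : ℕ) := Fin n → Fin 2

instance matrixMeasurableSpace (I : Type*) : MeasurableSpace (Matrix I I ℂ) :=
  borel _

instance matrixBorelSpace (I : Type*) : BorelSpace (Matrix I I ℂ) := ⟨rfl⟩

/-- The Haar random state `ψ = U e₁`: the column of the unitary `U` at the fixed
standard basis index `default`. -/
def haarState {I : Type*} [DecidableEq I] [Fintype I] [Inhabited I]
    (U : Matrix.unitaryGroup I ℂ) : I → ℂ :=
  fun i => U.1 i default

/-- Reduced density matrix on the first two tensor factors of a tripartite vector:
`ρ_AB[(a,b),(a',b')] = ∑_c ψ(a,b,c) conj (ψ(a',b',c))`. -/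
def rhoAB {IA IB IC : Type*} [Fintype IC] (ψ : IA × IB × IC → ℂ) :
    Matrix (IA × IB) (IA × IB) ℂ :=
  Matrix.of fun p q => ∑ x : IC, ψ (p.1, p.2, x) * (starRingEnd ℂ) (ψ (q.1, q.2, x))

/-- The orthogonal projection `Π_m` onto `m` EPR pairs between the first `m` qubits
of `A` and the first `m` qubits of `B`, tensored with the identity on all remaining
qubits.  Its matrix entries are
`Π_m[(a,b),(a',b')] = 2^{-m} [∀ k<m, a_k = b_k] [∀ k<m, a'_k = b'_k]
  [∀ k ≥ m, a_k = a'_k] [∀ k ≥ m, b_k = b'_k]`. -/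
def eprProj (nA nB m : ℕ) :
    Matrix (QubitIdx nA × QubitIdx nB) (QubitIdx nA × QubitIdx nB) ℂ :=
  Matrix.of fun p q =>
    if (∀ (k : ℕ) (hA : k < nA) (hB : k < nB), k < m →
          p.1 ⟨k, hA⟩ = p.2 ⟨k, hB⟩ ∧ q.1 ⟨k, hA⟩ = q.2 ⟨k, hB⟩)
        ∧ (∀ k : Fin nA, m ≤ (k : ℕ) → p.1 k = q.1 k)
        ∧ (∀ k : Fin nB, m ≤ (k : ℕ) → p.2 k = q.2 k)
    then ((2 : ℂ) ^ m)⁻¹ else 0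

set_option linter.unusedSectionVars false

section HaarPart

variable {I : Type*} [DecidableEq I] [Fintype I]

lemma mulVec_measurePreserving (U : Matrix.unitaryGroup I ℂ) :
    MeasurePreserving (fun v : I → ℂ => U.1 *ᵥ v) volume volume := by
  let f : (I → ℂ) →ₗ[ℝ] (I → ℂ) := (Matrix.toLin' U.1).restrictScalars ℝ
  have hdet : |LinearMap.det f| = 1 := by
    have h1 : LinearMap.det f = Algebra.norm ℝ (LinearMap.det (Matrix.toLin' U.1)) :=
      LinearMap.det_restrictScalars ..
    rw [h1, LinearMap.det_toLin', Algebra.norm_complex_apply]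
    have h2 := (Matrix.det_of_mem_unitary U.2)
    have h3 : Complex.normSq U.1.det = 1 := by
      have := (Unitary.mem_iff.1 h2).2
      have h4 := Complex.mul_conj (U.1.det)
      rw [show (starRingEnd ℂ) U.1.det = star U.1.det from rfl, this] at h4
      exact_mod_cast h4.symm
    simp [h3]
  have hne : LinearMap.det f ≠ 0 := by
    intro h; simp [h] at hdet
  have hmeas : Measurable (fun v : I → ℂ => U.1 *ᵥ v) :=
    Continuous.measurable (by fun_prop)
  refine ⟨hmeas, ?_⟩
  have := Measure.map_linearMap_addHaar_eq_smul_addHaar (volume : Measure (I → ℂ)) hne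
  rw [abs_inv, hdet] at this
  simp only [ENNReal.ofReal_one, inv_one, one_smul] at this
  exact this

instance unitaryCompact : CompactSpace (Matrix.unitaryGroup I ℂ) := by
  refine (isCompact_iff_compactSpace (s := (Matrix.unitaryGroup I ℂ : Set (Matrix I I ℂ)))).1 ?_
  have h1 : IsCompact (Set.pi Set.univ fun _ : I => Set.pi Set.univ fun _ : I =>
      Metric.closedBall (0 : ℂ) 1) :=
    isCompact_univ_pi fun _ => isCompact_univ_pi fun _ => isCompact_closedBall _ _
  refine IsCompact.of_isClosed_subset (X := Matrix I I ℂ) h1 ?_ ?_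
  · have : ((Matrix.unitaryGroup I ℂ : Set (Matrix I I ℂ))) = {A | A * star A = 1} := by
      ext A; exact Matrix.mem_unitaryGroup_iff
    rw [this]
    exact isClosed_eq (by fun_prop) continuous_const
  · intro A hA
    exact fun i _ j _ => mem_closedBall_zero_iff.2 (entry_norm_bound_of_unitary hA i j)

lemma haar_right_invariant (μ : Measure (Matrix.unitaryGroup I ℂ)) [μ.IsHaarMeasure]
    [IsProbabilityMeasure μ] (V : Matrix.unitaryGroup I ℂ) :
    MeasurePreserving (fun U => U * V) μ μ := by
  have hm : Measurable (fun U : Matrix.unitaryGroup I ℂ => U * V) :=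
    Continuous.measurable (by fun_prop)
  refine ⟨hm, ?_⟩
  have : IsProbabilityMeasure (μ.map (fun U => U * V)) := Measure.isProbabilityMeasure_map hm.aemeasurable
  have : (μ.map (fun U => U * V)).IsMulLeftInvariant := by infer_instance
  have : (μ.map (fun U => U * V)).IsHaarMeasure := by
    refine Measure.isHaarMeasure_of_isCompact_nonempty_interior _ Set.univ isCompact_univ ?_ ?_ ?_ <;> simp
  exact Measure.isHaarMeasure_eq_of_isProbabilityMeasure _ _

lemma exists_unitary_col (i₀ : I) (v : I → ℂ) (hv : ∑ i, ‖v i‖ ^ 2 = 1) :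
    ∃ V : Matrix.unitaryGroup I ℂ, ∀ i, V.1 i i₀ = v i := by
  have hn : ‖(WithLp.toLp 2 v : EuclideanSpace ℂ I)‖ = 1 := by
    rw [EuclideanSpace.norm_eq]; simp [hv]
  obtain ⟨b, hb⟩ := Orthonormal.exists_orthonormalBasis_extension_of_card_eq
    (𝕜 := ℂ) (E := EuclideanSpace ℂ I) (ι := I) (by simp)
    (v := fun _ => WithLp.toLp 2 v) (s := {i₀}) (by
      constructor
      · intro i; simpa using hn
      · intro i j hij; exact absurd (Subsingleton.elim i j) hij)
  refine ⟨⟨(EuclideanSpace.basisFun I ℂ).toBasis.toMatrix b,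
    OrthonormalBasis.toMatrix_orthonormalBasis_mem_unitary _ _⟩, fun i => ?_⟩
  have := hb i₀ rfl
  simp [Module.Basis.toMatrix_apply, this]

/-- All unit vectors are equivalent under Haar. -/
lemma haar_unit_eq (i₀ : I) (μ : Measure (Matrix.unitaryGroup I ℂ)) [μ.IsHaarMeasure]
    [IsProbabilityMeasure μ] (v : I → ℂ) (hv : ∑ i, ‖v i‖ ^ 2 = 1) (S : Set (I → ℂ))
    (hS : MeasurableSet S) :
    μ {U | U.1 *ᵥ v ∈ S} = μ {U | (fun i => U.1 i i₀) ∈ S} := by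
  obtain ⟨V, hV⟩ := exists_unitary_col i₀ v hv
  have hm : MeasurableSet {U : Matrix.unitaryGroup I ℂ | (fun i => U.1 i i₀) ∈ S} := by
    refine hS.preimage (Continuous.measurable ?_)
    exact continuous_pi fun i => (continuous_apply_apply i i₀).comp continuous_subtype_val
  rw [← (haar_right_invariant μ V).measure_preimage hm.nullMeasurableSet]
  congr 1
  ext U
  simp only [Set.mem_ofPred_eq, Set.mem_preimage]
  have : (fun i => (U * V).1 i i₀) = U.1 *ᵥ v := by
    ext i
    simp [Matrix.mul_apply, Matrix.mulVec, dotProduct, hV]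
  rw [this]

end HaarPart
section GaussPart

lemma binary_pinsker (p q : ℝ) (hp : 0 < p) (hpq : p ≤ q) (hq : q < 1) :
    p * Real.log (q / p) + (1 - p) * Real.log ((1 - q) / (1 - p)) ≤ -(2 * (q - p) ^ 2) := by
  let f : ℝ → ℝ := fun x => p * Real.log x + (1 - p) * Real.log (1 - x) + 2 * (x - p) ^ 2
  have hder : ∀ x ∈ Set.Icc p q, HasDerivAt f (p * (1 / x) + (1 - p) * (-1 / (1 - x))
      + 4 * (x - p)) x := by
    intro x hx
    have hx0 : x ≠ 0 := by linarith [hx.1]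
    have hx1 : 1 - x ≠ 0 := by linarith [hx.2]
    have h1 := ((hasDerivAt_id x).log hx0).const_mul p
    have h2 := ((((hasDerivAt_id x).const_sub 1)).log hx1).const_mul (1 - p)
    have h3 := ((((hasDerivAt_id x).sub_const p).pow 2).const_mul 2)
    convert! (h1.add h2).add h3 using 1
    simp; ring
  have hanti : AntitoneOn f (Set.Icc p q) := by
    refine antitoneOn_of_deriv_nonpos (convex_Icc p q)
      (fun x hx => (hder x hx).continuousAt.continuousWithinAt)
      (fun x hx => (hder x (interior_subset hx)).differentiableAt.differentiableWithinAt) ?_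
    intro x hx
    have hx' := interior_subset hx
    rw [(hder x hx').deriv]
    have hx0 : 0 < x := by linarith [hx'.1]
    have hx1 : 0 < 1 - x := by linarith [hx'.2]
    have : p * (1 / x) + (1 - p) * (-1 / (1 - x)) + 4 * (x - p)
        = -((x - p) * (2 * x - 1) ^ 2 / (x * (1 - x))) := by
      field_simp; ring
    rw [this]
    have : 0 ≤ x - p := by linarith [hx'.1]
    have : 0 ≤ (x - p) * (2 * x - 1) ^ 2 / (x * (1 - x)) := by positivity
    linarith
  have h := hanti (Set.left_mem_Icc.2 hpq) (Set.right_mem_Icc.2 hpq) hpq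
  simp only [f] at h
  have e1 : Real.log (q / p) = Real.log q - Real.log p :=
    Real.log_div (by linarith) (by linarith)
  have e2 : Real.log ((1 - q) / (1 - p)) = Real.log (1 - q) - Real.log (1 - p) :=
    Real.log_div (by linarith) (by linarith)
  rw [e1, e2]
  simp only [sub_self] at h
  linarith

variable {I : Type*} [DecidableEq I] [Fintype I]

lemma gauss_complex (b : ℝ) (hb : 0 < b) :
    ∫ z : ℂ, Real.exp (-b * ‖z‖ ^ 2) = Real.pi / b := by
  have := GaussianFourier.integral_rexp_neg_mul_sq_norm (V := ℂ) hb
  simpa using this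

lemma gauss_pi (a : I → ℝ) (ha : ∀ i, 0 < a i) :
    ∫⁻ v : I → ℂ, ENNReal.ofReal (Real.exp (-∑ i, a i * ‖v i‖ ^ 2))
      = ENNReal.ofReal (∏ i, (Real.pi / a i)) := by
  have h1 : ∫ v : I → ℂ, Real.exp (-∑ i, a i * ‖v i‖ ^ 2) = ∏ i, (Real.pi / a i) := by
    have := integral_fintype_prod_volume_eq_prod (𝕜 := ℝ) (ι := I) (E := fun _ => ℂ)
      (fun i z => Real.exp (-(a i) * ‖z‖ ^ 2))
    simp_rw [fun i => gauss_complex (a i) (ha i)] at this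
    rw [← this]
    congr 1
    ext v
    rw [← Real.exp_sum, ← Finset.sum_neg_distrib]
    simp
  have hpos : 0 < ∏ i, (Real.pi / a i) :=
    Finset.prod_pos fun i _ => div_pos Real.pi_pos (ha i)
  have hIntegr : Integrable (fun v : I → ℂ => Real.exp (-∑ i, a i * ‖v i‖ ^ 2)) := by
    by_contra hh
    rw [integral_undef hh] at h1
    exact hpos.ne h1
  rw [← h1, ofReal_integral_eq_lintegral_ofReal hIntegr]
  exact Filter.Eventually.of_forall fun v => (Real.exp_pos _).le

/-- squared norm -/
def nsq (v : I → ℂ) : ℝ := ∑ i, ‖v i‖ ^ 2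

/-- quadratic form -/
def qf (P : Matrix I I ℂ) (v : I → ℂ) : ℝ := (star v ⬝ᵥ (P *ᵥ v)).re

lemma nsq_eq (v : I → ℂ) : nsq v = (star v ⬝ᵥ v).re := by
  simp only [nsq, dotProduct, Complex.re_sum]
  refine Finset.sum_congr rfl fun i _ => ?_
  simp [Complex.sq_norm, Complex.normSq_apply]

lemma qf_conj (P M : Matrix I I ℂ) (v : I → ℂ) : qf P (M *ᵥ v) = qf (Mᴴ * P * M) v := by
  simp only [qf, Matrix.star_mulVec, ← Matrix.mulVec_mulVec, Matrix.dotProduct_mulVec,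
    Matrix.vecMul_vecMul]

lemma nsq_unitary (U : Matrix.unitaryGroup I ℂ) (v : I → ℂ) : nsq (U.1 *ᵥ v) = nsq v := by
  have h : U.1ᴴ * U.1 = 1 := Matrix.UnitaryGroup.star_mul_self U
  rw [nsq_eq, nsq_eq, Matrix.star_mulVec, Matrix.dotProduct_mulVec, Matrix.vecMul_vecMul, h,
    Matrix.vecMul_one]

lemma continuous_qf (P : Matrix I I ℂ) : Continuous (qf P) := by
  unfold qf; fun_prop

lemma continuous_nsq : Continuous (nsq : (I → ℂ) → ℝ) := by
  unfold nsq; fun_prop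

lemma qf_smul (P : Matrix I I ℂ) (r : ℝ) (v : I → ℂ) : qf P ((r : ℂ) • v) = r ^ 2 * qf P v := by
  unfold qf
  rw [Matrix.mulVec_smul, star_smul, smul_dotProduct, dotProduct_smul]
  simp only [smul_eq_mul, Complex.star_def, Complex.conj_ofReal, Complex.re_ofReal_mul]
  ring

lemma nsq_smul (r : ℝ) (v : I → ℂ) : nsq ((r : ℂ) • v) = r ^ 2 * nsq v := by
  simp [nsq, Finset.mul_sum, mul_pow]

lemma qf_diag (l : I → ℝ) (v : I → ℂ) :
    qf (Matrix.diagonal (fun i => (l i : ℂ))) v = ∑ i, l i * ‖v i‖ ^ 2 := by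
  simp only [qf, dotProduct, Complex.re_sum, Matrix.mulVec_diagonal]
  refine Finset.sum_congr rfl fun i _ => ?_
  simp [Complex.sq_norm, Complex.normSq_apply]; ring

lemma gauss_quad (P : Matrix I I ℂ) (hP : P.IsHermitian) (s t : ℝ)
    (h : ∀ i, 0 < s - t * hP.eigenvalues i) :
    ∫⁻ v : I → ℂ, ENNReal.ofReal (Real.exp (-(s * nsq v) + t * qf P v))
      = ENNReal.ofReal (∏ i, (Real.pi / (s - t * hP.eigenvalues i))) := by
  rw [← gauss_pi _ h]
  have hmeas : Measurable fun v : I → ℂ =>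
      ENNReal.ofReal (Real.exp (-(s * nsq v) + t * qf P v)) := by
    have := continuous_qf P
    have := continuous_nsq (I := I)
    exact ENNReal.measurable_ofReal.comp (Continuous.measurable (by fun_prop))
  rw [← (mulVec_measurePreserving hP.eigenvectorUnitary).lintegral_comp hmeas]
  refine lintegral_congr fun v => ?_
  rw [nsq_unitary, qf_conj]
  have hd : (hP.eigenvectorUnitary.1)ᴴ * P * hP.eigenvectorUnitary.1
      = Matrix.diagonal (fun i => (hP.eigenvalues i : ℂ)) := by
    have h1 : (hP.eigenvectorUnitary.1)ᴴ * hP.eigenvectorUnitary.1 = 1 :=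
      Matrix.UnitaryGroup.star_mul_self _
    have h2 := hP.spectral_theorem
    rw [Unitary.conjStarAlgAut_apply] at h2
    refine (congrArg (fun X => (hP.eigenvectorUnitary.1)ᴴ * X * hP.eigenvectorUnitary.1) h2).trans ?_
    change (hP.eigenvectorUnitary.1)ᴴ * (hP.eigenvectorUnitary.1 * _ *
      (hP.eigenvectorUnitary.1)ᴴ) * hP.eigenvectorUnitary.1 = _
    rw [← mul_assoc, ← mul_assoc, h1, one_mul, mul_assoc, h1, mul_one]
    rfl
  rw [hd, qf_diag, nsq, Finset.mul_sum, Finset.mul_sum, ← Finset.sum_neg_distrib,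
    ← Finset.sum_neg_distrib, ← Finset.sum_add_distrib]
  congr 3
  ext i; ring

lemma haar_lower (i₀ : I) (μ : Measure (Matrix.unitaryGroup I ℂ)) [μ.IsHaarMeasure]
    [IsProbabilityMeasure μ] (P : Matrix I I ℂ) (q t : ℝ) (ht : 0 ≤ t) (v : I → ℂ) :
    ENNReal.ofReal (Real.exp (-(1 * nsq v) + 0 * qf P v)) * μ {U | q ≤ qf P (fun i => U.1 i i₀)}
      ≤ ∫⁻ U, ENNReal.ofReal (Real.exp
        (-((1 + t * q) * nsq (U.1 *ᵥ v)) + t * qf P (U.1 *ᵥ v))) ∂μ := by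
  have hcm : Continuous fun U : Matrix.unitaryGroup I ℂ => U.1 *ᵥ v := by fun_prop
  have hmeas : Measurable fun U : Matrix.unitaryGroup I ℂ => ENNReal.ofReal (Real.exp
        (-((1 + t * q) * nsq (U.1 *ᵥ v)) + t * qf P (U.1 *ᵥ v))) := by
    have := (continuous_qf P).comp hcm
    have := (continuous_nsq (I := I)).comp hcm
    simp only [Function.comp_def] at *
    exact ENNReal.measurable_ofReal.comp (Continuous.measurable (by fun_prop))
  refine le_trans ?_ (mul_meas_ge_le_lintegral hmeas
    (ENNReal.ofReal (Real.exp (-(1 * nsq v) + 0 * qf P v))))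
  gcongr 1
  have key : {U : Matrix.unitaryGroup I ℂ | q * nsq v ≤ qf P (U.1 *ᵥ v)} ⊆
      {U | ENNReal.ofReal (Real.exp (-(1 * nsq v) + 0 * qf P v)) ≤ ENNReal.ofReal (Real.exp
        (-((1 + t * q) * nsq (U.1 *ᵥ v)) + t * qf P (U.1 *ᵥ v)))} := by
    intro U hU
    simp only [Set.mem_ofPred_eq] at hU ⊢
    rw [nsq_unitary]
    refine ENNReal.ofReal_le_ofReal (Real.exp_le_exp.2 ?_)
    nlinarith [mul_le_mul_of_nonneg_left hU ht]
  refine le_trans ?_ (measure_mono key)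
  rcases eq_or_ne (nsq v) 0 with h0 | h0
  · have hv : v = 0 := by
      ext i
      have := (Finset.sum_eq_zero_iff_of_nonneg (fun i _ => by positivity)).1 h0 i (Finset.mem_univ i)
      simpa using this
    subst hv
    refine measure_mono fun U _ => ?_
    simp [qf, nsq]
  · have hpos : 0 < nsq v := lt_of_le_of_ne (Finset.sum_nonneg fun i _ => by positivity) h0.symm
    set r := (Real.sqrt (nsq v))⁻¹ with hr
    have hr2 : r ^ 2 = (nsq v)⁻¹ := by rw [hr, inv_pow, Real.sq_sqrt hpos.le]
    have hS : MeasurableSet {w : I → ℂ | q ≤ qf P w} :=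
      measurableSet_le measurable_const (continuous_qf P).measurable
    have := haar_unit_eq i₀ μ ((r : ℂ) • v) (by
      change nsq _ = 1
      rw [nsq_smul, hr2, inv_mul_cancel₀ h0]) _ hS
    simp only [Set.mem_ofPred_eq] at this
    rw [← this]
    refine measure_mono fun U hU => ?_
    simp only [Set.mem_ofPred_eq] at hU ⊢
    rw [Matrix.mulVec_smul, qf_smul, hr2] at hU
    rw [inv_mul_eq_div, le_div_iff₀ hpos] at hU
    exact hU

lemma haar_tail (i₀ : I) (μ : Measure (Matrix.unitaryGroup I ℂ)) [μ.IsHaarMeasure]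
    [IsProbabilityMeasure μ] (P : Matrix I I ℂ) (hP : P.IsHermitian) (hPP : P * P = P)
    (p q : ℝ) (hp : 0 < p) (hpq : p < q) (hq : q < 1)
    (htr : P.trace = ((p * Fintype.card I : ℝ) : ℂ)) :
    μ {U | q ≤ qf P (fun i => U.1 i i₀)} ≤
      ENNReal.ofReal (Real.exp (-(2 * (q - p) ^ 2 * Fintype.card I))) := by
  have hq0 : 0 < q := hp.trans hpq
  have hq1 : 0 < 1 - q := by linarith
  have hp1 : 0 < 1 - p := by linarith
  set t := (q - p) / (q * (1 - q)) with htdef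
  have ht : 0 ≤ t := div_nonneg (by linarith) (by positivity)
  have e0 : 1 + t * q = (1 - p) / (1 - q) := by rw [htdef]; field_simp; ring
  have e1 : 1 + t * q - t = p / q := by rw [htdef]; field_simp; ring
  have hl : ∀ i, hP.eigenvalues i = 0 ∨ hP.eigenvalues i = 1 := by
    intro i
    have h1 := hP.mulVec_eigenvectorBasis i
    have h2 : P *ᵥ (P *ᵥ (hP.eigenvectorBasis i).ofLp) = P *ᵥ (hP.eigenvectorBasis i).ofLp := by
      rw [Matrix.mulVec_mulVec, hPP]
    rw [h1, Matrix.mulVec_smul, h1, smul_smul] at h2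
    have hne : (hP.eigenvectorBasis i).ofLp ≠ 0 := by
      intro h
      have := hP.eigenvectorBasis.orthonormal.ne_zero i
      exact this (by ext j; simp [h])
    have h3 := smul_left_injective ℝ hne h2
    rcases eq_or_ne (hP.eigenvalues i) 0 with h | h
    · exact Or.inl h
    · exact Or.inr (mul_left_cancel₀ h (by rw [h3, mul_one]))
  have hpos : ∀ i, 0 < 1 + t * q - t * hP.eigenvalues i := by
    intro i
    rcases hl i with h | h <;> rw [h]
    · rw [mul_zero, sub_zero, e0]; positivity
    · rw [mul_one, e1]; positivity
  have hsum : ∑ i, hP.eigenvalues i = p * Fintype.card I := by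
    have := hP.trace_eq_sum_eigenvalues
    rw [htr] at this
    apply Complex.ofReal_injective
    rw [this, Complex.ofReal_sum]
    rfl
  have hmeas : Measurable fun v : I → ℂ =>
      ENNReal.ofReal (Real.exp (-((1 + t * q) * nsq v) + t * qf P v)) := by
    have := continuous_qf P
    have := continuous_nsq (I := I)
    exact ENNReal.measurable_ofReal.comp (Continuous.measurable (by fun_prop))
  have main : ENNReal.ofReal (∏ i : I, (Real.pi / (1 - 0 * hP.eigenvalues i))) *
      μ {U | q ≤ qf P (fun i => U.1 i i₀)}
      ≤ ENNReal.ofReal (∏ i, (Real.pi / (1 + t * q - t * hP.eigenvalues i))) := by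
    rw [← gauss_quad P hP _ _ hpos, ← gauss_quad P hP _ _ (by simp),
      ← lintegral_mul_const' _ _ (measure_ne_top _ _)]
    refine (lintegral_mono fun v => haar_lower i₀ μ P q t ht v).trans ?_
    rw [lintegral_lintegral_swap]
    · simp_rw [fun U => (mulVec_measurePreserving U).lintegral_comp hmeas]
      simp
    · refine Measurable.aemeasurable ?_
      have hc : Continuous fun x : (I → ℂ) × Matrix.unitaryGroup I ℂ => x.2.1 *ᵥ x.1 := by
        fun_prop
      exact hmeas.comp hc.measurable
  have hprod : ∏ i, (Real.pi / (1 + t * q - t * hP.eigenvalues i))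
      = (∏ i : I, (Real.pi / (1 - 0 * hP.eigenvalues i))) *
        Real.exp (Fintype.card I * (p * Real.log (q / p) + (1 - p) * Real.log ((1 - q) / (1 - p)))) := by
    have : (Fintype.card I * (p * Real.log (q / p) + (1 - p) * Real.log ((1 - q) / (1 - p))))
      = ∑ i, (hP.eigenvalues i * Real.log (q / p) +
          (1 - hP.eigenvalues i) * Real.log ((1 - q) / (1 - p))) := by
      rw [Finset.sum_add_distrib, ← Finset.sum_mul, ← Finset.sum_mul, Finset.sum_sub_distrib, hsum]
      simp; ring
    rw [this, Real.exp_sum, ← Finset.prod_mul_distrib]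
    refine Finset.prod_congr rfl fun i _ => ?_
    rcases hl i with h | h <;> rw [h]
    · simp only [mul_zero, sub_zero, e0, zero_mul, zero_add, one_mul, div_one]
      rw [Real.exp_log (by positivity)]; field_simp
    · simp only [mul_one, e1, sub_self, zero_mul, add_zero, one_mul, sub_zero, div_one]
      rw [Real.exp_log (by positivity)]; field_simp
  have hpp : 0 < ∏ i : I, (Real.pi / (1 - 0 * hP.eigenvalues i)) :=
    Finset.prod_pos fun i _ => by simp [Real.pi_pos]
  rw [hprod, ENNReal.ofReal_mul hpp.le] at main
  have := (ENNReal.mul_le_mul_iff_right (ENNReal.ofReal_pos.2 hpp).ne' ENNReal.ofReal_ne_top).1 main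
  refine this.trans (ENNReal.ofReal_le_ofReal (Real.exp_le_exp.2 ?_))
  have hb := binary_pinsker p q hp hpq.le hq
  have hc : (0 : ℝ) ≤ Fintype.card I := by positivity
  nlinarith [mul_le_mul_of_nonneg_left hb hc]

end GaussPart
section NetPart

lemma card_separated_le {E : Type*} [NormedAddCommGroup E] [NormedSpace ℝ E]
    [FiniteDimensional ℝ E] (ε : ℝ) (hε : 0 < ε) (hε1 : ε ≤ 1) (s : Finset E)
    (hs : ∀ c ∈ s, ‖c‖ ≤ 1) (h : ∀ c ∈ s, ∀ d ∈ s, c ≠ d → ε ≤ ‖c - d‖) :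
    (s.card : ℝ) ≤ (3 / ε) ^ Module.finrank ℝ E := by
  borelize E
  let μ : Measure E := Measure.addHaar
  let δ : ℝ := ε / 2
  let ρ : ℝ := 3 / 2
  have ρpos : 0 < ρ := by norm_num [ρ]
  have δpos : 0 < δ := by positivity
  set A := ⋃ c ∈ s, Metric.ball (c : E) δ with hA
  have D : Set.Pairwise (s : Set E) (Function.onFun Disjoint fun c => Metric.ball (c : E) δ) := by
    rintro c hc d hd hcd
    apply Metric.ball_disjoint_ball
    rw [dist_eq_norm]
    have := h c hc d hd hcd
    simp only [δ]; linarith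
  have A_subset : A ⊆ Metric.ball (0 : E) ρ := by
    refine Set.iUnion₂_subset fun x hx => ?_
    apply Metric.ball_subset_ball'
    rw [dist_zero_right]
    have := hs x hx
    simp only [δ, ρ]; linarith
  have I :
    (s.card : ENNReal) * ENNReal.ofReal (δ ^ Module.finrank ℝ E) * μ (Metric.ball 0 1) ≤
      ENNReal.ofReal (ρ ^ Module.finrank ℝ E) * μ (Metric.ball 0 1) :=
    calc
      (s.card : ENNReal) * ENNReal.ofReal (δ ^ Module.finrank ℝ E) * μ (Metric.ball 0 1) = μ A := by
        rw [hA, measure_biUnion_finset D fun c _ => measurableSet_ball]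
        simp only [μ.addHaar_ball_of_pos _ δpos]
        simp only [Finset.sum_const, nsmul_eq_mul, mul_assoc]
      _ ≤ μ (Metric.ball (0 : E) ρ) := measure_mono A_subset
      _ = ENNReal.ofReal (ρ ^ Module.finrank ℝ E) * μ (Metric.ball 0 1) := by
        simp only [μ.addHaar_ball_of_pos _ ρpos]
  have J : (s.card : ENNReal) * ENNReal.ofReal (δ ^ Module.finrank ℝ E) ≤
      ENNReal.ofReal (ρ ^ Module.finrank ℝ E) :=
    (ENNReal.mul_le_mul_iff_left (Metric.measure_ball_pos _ _ zero_lt_one).ne'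
      measure_ball_lt_top.ne).1 I
  have K := ENNReal.toReal_le_of_le_ofReal (pow_nonneg ρpos.le _) J
  rw [ENNReal.toReal_mul, ENNReal.toReal_ofReal (by positivity), ENNReal.toReal_natCast,
    ← le_div_iff₀ (by positivity), ← div_pow] at K
  have e : ρ / δ = 3 / ε := by simp only [ρ, δ]; field_simp
  rwa [e] at K

lemma exists_net {E : Type*} [NormedAddCommGroup E] [NormedSpace ℝ E]
    [FiniteDimensional ℝ E] (ε : ℝ) (hε : 0 < ε) (hε1 : ε ≤ 1) (S : Set E)
    (hS : ∀ c ∈ S, ‖c‖ ≤ 1) :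
    ∃ N : Finset E, (∀ c ∈ N, c ∈ S) ∧ (N.card : ℝ) ≤ (3 / ε) ^ Module.finrank ℝ E ∧
      ∀ x ∈ S, ∃ y ∈ N, ‖x - y‖ ≤ ε := by
  let T : Set ℕ := {k | ∃ s : Finset E, (∀ c ∈ s, c ∈ S) ∧
    (∀ c ∈ s, ∀ d ∈ s, c ≠ d → ε ≤ ‖c - d‖) ∧ s.card = k}
  have hbdd : BddAbove T := by
    refine ⟨⌊(3 / ε) ^ Module.finrank ℝ E⌋₊, ?_⟩
    rintro k ⟨s, h1, h2, rfl⟩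
    exact Nat.le_floor (card_separated_le ε hε hε1 s (fun c hc => hS c (h1 c hc)) h2)
  have hne : T.Nonempty := ⟨0, ∅, by simp⟩
  obtain ⟨N, h1, h2, h3⟩ := Nat.sSup_mem hne hbdd
  refine ⟨N, h1, card_separated_le ε hε hε1 N (fun c hc => hS c (h1 c hc)) h2, ?_⟩
  intro x hx
  by_contra! hcon
  have hxN : x ∉ N := fun hh => by
    have := hcon x hh
    simp at this; linarith
  have : N.card + 1 ∈ T := by
    refine ⟨insert x N, ?_, ?_, Finset.card_insert_of_notMem hxN⟩
    · intro c hc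
      rcases Finset.mem_insert.1 hc with rfl | hc
      · exact hx
      · exact h1 c hc
    · intro c hc d hd hcd
      rcases Finset.mem_insert.1 hc with hc | hc <;> rcases Finset.mem_insert.1 hd with hd | hd
      · exact absurd (hc.trans hd.symm) hcd
      · rw [hc]; exact (hcon d hd).le
      · rw [hd, norm_sub_rev]; exact (hcon c hc).le
      · exact h2 c hc d hd hcd
  have := le_csSup hbdd this
  omega

variable {I : Type*} [DecidableEq I] [Fintype I]

lemma nsq_eq_norm (v : I → ℂ) : nsq v = ‖(WithLp.toLp 2 v : EuclideanSpace ℂ I)‖ ^ 2 := by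
  rw [EuclideanSpace.norm_sq_eq]; rfl

section
open scoped Matrix.Norms.L2Operator

lemma unitary_net [Nonempty I] (ε : ℝ) (hε : 0 < ε) (hε1 : ε ≤ 1) :
    ∃ N : Finset (Matrix I I ℂ), (∀ M ∈ N, M ∈ Matrix.unitaryGroup I ℂ) ∧
      (N.card : ℝ) ≤ (3 / ε) ^ (2 * Fintype.card I ^ 2) ∧
      ∀ U ∈ Matrix.unitaryGroup I ℂ, ∃ M ∈ N, ∀ v : I → ℂ,
        nsq ((U - M) *ᵥ v) ≤ ε ^ 2 * nsq v := by
  have hfr : Module.finrank ℝ (Matrix I I ℂ) = 2 * Fintype.card I ^ 2 := by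
    rw [Module.finrank_matrix, Complex.finrank_real_complex]; ring
  obtain ⟨N, h1, h2, h3⟩ := exists_net (E := Matrix I I ℂ) ε hε hε1
    (Matrix.unitaryGroup I ℂ : Set (Matrix I I ℂ))
    (fun c hc => (CStarRing.norm_of_mem_unitary hc).le)
  rw [hfr] at h2
  refine ⟨N, h1, h2, fun U hU => ?_⟩
  obtain ⟨M, hM, hle⟩ := h3 U hU
  refine ⟨M, hM, fun v => ?_⟩
  have := Matrix.l2_opNorm_mulVec (U - M) (WithLp.toLp 2 v)
  rw [nsq_eq_norm, nsq_eq_norm, ← mul_pow]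
  refine pow_le_pow_left₀ (norm_nonneg _) ?_ 2
  refine le_trans this ?_
  gcongr

end

lemma nsq_kron_left {J : Type*} [DecidableEq J] [Fintype J] (M : Matrix I I ℂ) (e : ℝ)
    (h : ∀ v, nsq (M *ᵥ v) ≤ e * nsq v) (v : I × J → ℂ) :
    nsq ((M ⊗ₖ (1 : Matrix J J ℂ)) *ᵥ v) ≤ e * nsq v := by
  have h1 : ∀ w : I × J → ℂ, nsq w = ∑ j, nsq (fun i => w (i, j)) := by
    intro w; simp only [nsq, Fintype.sum_prod_type]; exact Finset.sum_comm
  rw [h1, h1, Finset.mul_sum]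
  refine Finset.sum_le_sum fun j _ => ?_
  refine le_trans (le_of_eq ?_) (h _)
  congr 1
  ext i
  simp [Matrix.mulVec, dotProduct, Fintype.sum_prod_type, Matrix.one_apply]

lemma nsq_kron_right {J : Type*} [DecidableEq J] [Fintype J] (M : Matrix I I ℂ) (e : ℝ)
    (h : ∀ v, nsq (M *ᵥ v) ≤ e * nsq v) (v : J × I → ℂ) :
    nsq (((1 : Matrix J J ℂ) ⊗ₖ M) *ᵥ v) ≤ e * nsq v := by
  have h1 : ∀ w : J × I → ℂ, nsq w = ∑ j, nsq (fun i => w (j, i)) := by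
    intro w; simp only [nsq, Fintype.sum_prod_type]
  rw [h1, h1, Finset.mul_sum]
  refine Finset.sum_le_sum fun j _ => ?_
  refine le_trans (le_of_eq ?_) (h _)
  congr 1
  ext i
  simp [Matrix.mulVec, dotProduct, Fintype.sum_prod_type, Matrix.one_apply]

end NetPart
section EprPart

/-- In split coordinates, the entries of the projector. -/
lemma eprProj_append (m a b : ℕ) (x y x' y' : Fin m → Fin 2) (u u' : Fin a → Fin 2)
    (w w' : Fin b → Fin 2) :
    eprProj (m + a) (m + b) m (Fin.append x u, Fin.append y w) (Fin.append x' u', Fin.append y' w')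
      = if x = y ∧ x' = y' ∧ u = u' ∧ w = w' then ((2 : ℂ) ^ m)⁻¹ else 0 := by
  simp only [eprProj, Matrix.of_apply]
  refine if_congr ?_ rfl rfl
  constructor
  · rintro ⟨h1, h2, h3⟩
    refine ⟨?_, ?_, ?_, ?_⟩
    · ext k
      have := (h1 k (by omega) (by omega) k.2).1
      have e1 : (⟨(k : ℕ), by omega⟩ : Fin (m + a)) = Fin.castAdd a k := rfl
      have e2 : (⟨(k : ℕ), by omega⟩ : Fin (m + b)) = Fin.castAdd b k := rfl
      rw [e1, e2, Fin.append_left, Fin.append_left] at this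
      rw [this]
    · ext k
      have := (h1 k (by omega) (by omega) k.2).2
      have e1 : (⟨(k : ℕ), by omega⟩ : Fin (m + a)) = Fin.castAdd a k := rfl
      have e2 : (⟨(k : ℕ), by omega⟩ : Fin (m + b)) = Fin.castAdd b k := rfl
      rw [e1, e2, Fin.append_left, Fin.append_left] at this
      rw [this]
    · ext k
      have := h2 (Fin.natAdd m k) (by simp)
      rw [Fin.append_right, Fin.append_right] at this
      rw [this]
    · ext k
      have := h3 (Fin.natAdd m k) (by simp)
      rw [Fin.append_right, Fin.append_right] at this
      rw [this]
  · rintro ⟨rfl, rfl, rfl, rfl⟩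
    refine ⟨?_, ?_, ?_⟩
    · intro k hA hB hk
      have e1 : (⟨k, hA⟩ : Fin (m + a)) = Fin.castAdd a ⟨k, hk⟩ := rfl
      have e2 : (⟨k, hB⟩ : Fin (m + b)) = Fin.castAdd b ⟨k, hk⟩ := rfl
      rw [e1, e2]
      simp only [Fin.append_left, and_self]
    · intro k hk
      obtain ⟨j, rfl⟩ : ∃ j : Fin a, k = Fin.natAdd m j :=
        ⟨⟨k - m, by omega⟩, by ext; simp; omega⟩
      simp
    · intro k hk
      obtain ⟨j, rfl⟩ : ∃ j : Fin b, k = Fin.natAdd m j :=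
        ⟨⟨k - m, by omega⟩, by ext; simp; omega⟩
      simp

lemma sum_append {β : Type*} [AddCommMonoid β] (m a b : ℕ) (f : QubitIdx (m + a) × QubitIdx (m + b) → β) :
    ∑ p, f p = ∑ x : QubitIdx m, ∑ u : QubitIdx a, ∑ y : QubitIdx m, ∑ w : QubitIdx b,
      f (Fin.append x u, Fin.append y w) := by
  rw [Fintype.sum_prod_type, ← (Fin.appendEquiv m a).sum_comp, Fintype.sum_prod_type]
  refine Finset.sum_congr rfl fun x _ => Finset.sum_congr rfl fun u _ => ?_
  rw [← (Fin.appendEquiv m b).sum_comp, Fintype.sum_prod_type]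
  rfl

lemma exists_append (m a : ℕ) (x : QubitIdx (m + a)) : ∃ y u, x = Fin.append y u :=
  ⟨_, _, ((Fin.appendEquiv m a).apply_symm_apply x).symm⟩

lemma eprProj_hermitian (nA nB m : ℕ) : (eprProj nA nB m).IsHermitian := by
  ext p q
  simp only [Matrix.conjTranspose_apply, eprProj, Matrix.of_apply, apply_ite star, star_zero,
    star_inv₀, star_pow, star_ofNat]
  refine if_congr ?_ rfl rfl
  constructor
  · rintro ⟨h1, h2, h3⟩
    exact ⟨fun k a b c => (h1 k a b c).symm, fun k hk => (h2 k hk).symm, fun k hk => (h3 k hk).symm⟩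
  · rintro ⟨h1, h2, h3⟩
    exact ⟨fun k a b c => (h1 k a b c).symm, fun k hk => (h2 k hk).symm, fun k hk => (h3 k hk).symm⟩

lemma eprProj_sq (nA nB m : ℕ) (hA : m ≤ nA) (hB : m ≤ nB) :
    eprProj nA nB m * eprProj nA nB m = eprProj nA nB m := by
  obtain ⟨a, rfl⟩ := Nat.exists_eq_add_of_le hA
  obtain ⟨b, rfl⟩ := Nat.exists_eq_add_of_le hB
  ext ⟨p1, p2⟩ ⟨q1, q2⟩
  obtain ⟨x, u, rfl⟩ := exists_append m a p1
  obtain ⟨y, w, rfl⟩ := exists_append m b p2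
  obtain ⟨x', u', rfl⟩ := exists_append m a q1
  obtain ⟨y', w', rfl⟩ := exists_append m b q2
  rw [Matrix.mul_apply, sum_append]
  simp only [eprProj_append]
  by_cases h : x = y ∧ x' = y' ∧ u = u' ∧ w = w'
  · obtain ⟨rfl, rfl, rfl, rfl⟩ := h
    trans ∑ s : QubitIdx m, ∑ t : QubitIdx a, ∑ s' : QubitIdx m, ∑ t' : QubitIdx b,
        if w = t' then (if s = s' then
          (if u = t then ((2 : ℂ) ^ m)⁻¹ * ((2 : ℂ) ^ m)⁻¹ else 0) else 0) else 0
    · refine Finset.sum_congr rfl fun s _ => Finset.sum_congr rfl fun t _ =>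
        Finset.sum_congr rfl fun s' _ => Finset.sum_congr rfl fun t' _ => ?_
      by_cases h1 : s = s' <;> by_cases h2 : u = t <;> by_cases h3 : w = t' <;>
        simp [h1, h2, h3]
    · simp
  · rw [if_neg h]
    refine Finset.sum_eq_zero fun s _ => Finset.sum_eq_zero fun t _ =>
      Finset.sum_eq_zero fun s' _ => Finset.sum_eq_zero fun t' _ => ?_
    by_cases h1 : x = y ∧ s = s' ∧ u = t ∧ w = t'
    · rw [if_neg (c := s = s' ∧ x' = y' ∧ t = u' ∧ t' = w'), mul_zero]
      rintro ⟨_, h2, h3, h4⟩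
      exact h ⟨h1.1, h2, h1.2.2.1.trans h3, h1.2.2.2.trans h4⟩
    · rw [if_neg h1, zero_mul]

lemma eprProj_trace (nA nB m : ℕ) (hA : m ≤ nA) (hB : m ≤ nB) :
    (eprProj nA nB m).trace = (((2 : ℝ) ^ (2 * m))⁻¹ * (2 ^ nA * 2 ^ nB) : ℝ) := by
  obtain ⟨a, rfl⟩ := Nat.exists_eq_add_of_le hA
  obtain ⟨b, rfl⟩ := Nat.exists_eq_add_of_le hB
  rw [Matrix.trace, sum_append]
  simp only [Matrix.diag_apply, eprProj_append]
  simp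
  field_simp
  ring

end EprPart
section Assembly

variable {A B C : Type*} [DecidableEq A] [Fintype A] [DecidableEq B] [Fintype B]
  [DecidableEq C] [Fintype C]

/-- extension of an operator on `A × B` by the identity on `C`. -/
def extC (P : Matrix (A × B) (A × B) ℂ) : Matrix (A × B × C) (A × B × C) ℂ :=
  (P ⊗ₖ (1 : Matrix C C ℂ)).submatrix (Equiv.prodAssoc A B C).symm (Equiv.prodAssoc A B C).symm

lemma extC_hermitian (P : Matrix (A × B) (A × B) ℂ) (hP : P.IsHermitian) :
    (extC P : Matrix (A × B × C) (A × B × C) ℂ).IsHermitian := by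
  unfold extC Matrix.IsHermitian
  rw [Matrix.conjTranspose_submatrix, Matrix.conjTranspose_kronecker, hP.eq,
    Matrix.conjTranspose_one]

lemma extC_sq (P : Matrix (A × B) (A × B) ℂ) (hP : P * P = P) :
    (extC P : Matrix (A × B × C) (A × B × C) ℂ) * extC P = extC P := by
  unfold extC
  rw [Matrix.submatrix_mul_equiv, ← Matrix.mul_kronecker_mul, hP, one_mul]

lemma extC_trace (P : Matrix (A × B) (A × B) ℂ) :
    (extC P : Matrix (A × B × C) (A × B × C) ℂ).trace = P.trace * Fintype.card C := by
  unfold extC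
  rw [← Matrix.trace_one, ← Matrix.trace_kronecker]
  exact (Equiv.prodAssoc A B C).symm.sum_comp fun i => (P ⊗ₖ (1 : Matrix C C ℂ)) i i

/-- The local unitary acting on the tripartite space. -/
def locK (UA : Matrix A A ℂ) (UB : Matrix B B ℂ) : Matrix (A × B × C) (A × B × C) ℂ :=
  UA ⊗ₖ (UB ⊗ₖ (1 : Matrix C C ℂ))

lemma locK_unitary (UA : Matrix A A ℂ) (UB : Matrix B B ℂ) (hA : UA ∈ Matrix.unitaryGroup A ℂ)
    (hB : UB ∈ Matrix.unitaryGroup B ℂ) :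
    (locK UA UB : Matrix (A × B × C) (A × B × C) ℂ) ∈ Matrix.unitaryGroup (A × B × C) ℂ :=
  Matrix.kronecker_mem_unitary hA (Matrix.kronecker_mem_unitary hB (one_mem _))

lemma trace_eq_qf (UA : Matrix A A ℂ) (UB : Matrix B B ℂ) (P : Matrix (A × B) (A × B) ℂ)
    (ψ : A × B × C → ℂ) :
    (Matrix.trace ((UA ⊗ₖ UB) * rhoAB ψ * (UA ⊗ₖ UB)ᴴ * P)).re
      = qf (extC P) (locK UA UB *ᵥ ψ) := by
  let Ψ : Matrix (A × B) C ℂ := Matrix.of fun p x => ψ (p.1, p.2, x)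
  have hρ : rhoAB ψ = Ψ * Ψᴴ := by
    ext p q
    simp [rhoAB, Ψ, Matrix.mul_apply]
  set W := UA ⊗ₖ UB with hW
  have h1 : Matrix.trace (W * rhoAB ψ * Wᴴ * P) = Matrix.trace ((W * Ψ)ᴴ * (P * (W * Ψ))) := by
    rw [hρ, Matrix.conjTranspose_mul, Matrix.trace_mul_comm _ (P * (W * Ψ)),
      Matrix.trace_mul_comm _ P]
    simp only [Matrix.mul_assoc]
  have h2 : (locK UA UB *ᵥ ψ : A × B × C → ℂ) = fun x => (W * Ψ) (x.1, x.2.1) x.2.2 := by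
    ext ⟨a, b, x⟩
    simp [locK, Matrix.mulVec, dotProduct, Matrix.mul_apply, Fintype.sum_prod_type, hW, Ψ,
      Matrix.one_apply, mul_assoc]
  rw [h1, h2, qf]
  congr 1
  generalize W * Ψ = X
  simp only [Matrix.trace, Matrix.diag_apply, Matrix.mul_apply, dotProduct, Matrix.mulVec,
    Fintype.sum_prod_type, extC, Matrix.submatrix_apply, Matrix.kronecker_apply,
    Equiv.prodAssoc_symm_apply, Matrix.one_apply, Matrix.conjTranspose_apply, Pi.star_apply]
  rw [Finset.sum_comm]
  refine Finset.sum_congr rfl fun a _ => ?_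
  rw [Finset.sum_comm]
  refine Finset.sum_congr rfl fun b _ => ?_
  refine Finset.sum_congr rfl fun x _ => ?_
  simp

variable {I : Type*} [DecidableEq I] [Fintype I]

lemma qf_proj (Q : Matrix I I ℂ) (hQ : Q.IsHermitian) (hQQ : Q * Q = Q) (v : I → ℂ) :
    qf Q v = nsq (Q *ᵥ v) := by
  rw [nsq_eq, Matrix.star_mulVec, hQ.eq, ← Matrix.dotProduct_mulVec, Matrix.mulVec_mulVec, hQQ, qf]

lemma nsq_nonneg (v : I → ℂ) : 0 ≤ nsq v := Finset.sum_nonneg fun i _ => by positivity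

lemma nsq_proj_le (Q : Matrix I I ℂ) (hQ : Q.IsHermitian) (hQQ : Q * Q = Q) (v : I → ℂ) :
    nsq (Q *ᵥ v) ≤ nsq v := by
  have h1 : (1 - Q).IsHermitian := Matrix.isHermitian_one.sub hQ
  have h2 : (1 - Q) * (1 - Q) = 1 - Q := by
    rw [mul_sub, sub_mul, sub_mul, hQQ]; simp
  have h3 := qf_proj (1 - Q) h1 h2 v
  have h4 : qf (1 - Q) v = nsq v - qf Q v := by
    simp [qf, nsq_eq, Matrix.sub_mulVec, dotProduct_sub]
  have := nsq_nonneg ((1 - Q) *ᵥ v)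
  rw [← qf_proj Q hQ hQQ]
  linarith

lemma sqrt_nsq_add (v w : I → ℂ) : √(nsq (v + w)) ≤ √(nsq v) + √(nsq w) := by
  simp only [nsq_eq_norm, Real.sqrt_sq (norm_nonneg _), WithLp.toLp_add]
  exact norm_add_le _ _

lemma qf_lipschitz (Q : Matrix (A × B × C) (A × B × C) ℂ) (hQ : Q.IsHermitian) (hQQ : Q * Q = Q)
    (UA MA : Matrix A A ℂ) (UB MB : Matrix B B ℂ)
    (hUA : UA ∈ Matrix.unitaryGroup A ℂ) (hUB : UB ∈ Matrix.unitaryGroup B ℂ)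
    (hMA : MA ∈ Matrix.unitaryGroup A ℂ) (hMB : MB ∈ Matrix.unitaryGroup B ℂ)
    (ε : ℝ) (hε : 0 ≤ ε)
    (hA : ∀ v, nsq ((UA - MA) *ᵥ v) ≤ ε ^ 2 * nsq v)
    (hB : ∀ v, nsq ((UB - MB) *ᵥ v) ≤ ε ^ 2 * nsq v)
    (ψ : A × B × C → ℂ) (hψ : nsq ψ = 1) :
    qf Q (locK UA UB *ᵥ ψ) ≤ qf Q (locK MA MB *ᵥ ψ) + 4 * ε := by
  have hsplit : Q *ᵥ (locK UA UB *ᵥ ψ) = Q *ᵥ (locK MA MB *ᵥ ψ) +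
      Q *ᵥ (((UA - MA) ⊗ₖ (1 : Matrix (B × C) (B × C) ℂ)) *ᵥ (locK 1 UB *ᵥ ψ)
        + locK MA 1 *ᵥ (((1 : Matrix A A ℂ) ⊗ₖ ((UB - MB) ⊗ₖ (1 : Matrix C C ℂ))) *ᵥ ψ)) := by
    rw [← Matrix.mulVec_add]
    congr 1
    simp only [locK, Matrix.mulVec_mulVec, ← Matrix.mul_kronecker_mul, ← Matrix.add_mulVec,
      mul_one, one_mul]
    congr 1
    ext i j
    simp only [Matrix.kroneckerMap_apply, Matrix.add_apply, Matrix.sub_apply]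
    ring
  have n1 : nsq (((UA - MA) ⊗ₖ (1 : Matrix (B × C) (B × C) ℂ)) *ᵥ (locK 1 UB *ᵥ ψ)) ≤ ε ^ 2 := by
    refine (nsq_kron_left _ _ hA _).trans ?_
    rw [nsq_unitary ⟨_, locK_unitary 1 UB (one_mem _) hUB⟩, hψ, mul_one]
  have n2 : nsq (locK MA 1 *ᵥ (((1 : Matrix A A ℂ) ⊗ₖ ((UB - MB) ⊗ₖ (1 : Matrix C C ℂ))) *ᵥ ψ))
      ≤ ε ^ 2 := by
    rw [nsq_unitary ⟨_, locK_unitary MA 1 hMA (one_mem _)⟩]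
    refine (nsq_kron_right _ _ (nsq_kron_left _ _ hB) _).trans ?_
    rw [hψ, mul_one]
  have b : ∀ K ∈ Matrix.unitaryGroup (A × B × C) ℂ, nsq (Q *ᵥ (K *ᵥ ψ)) ≤ 1 := by
    intro K hK
    refine (nsq_proj_le Q hQ hQQ _).trans ?_
    rw [nsq_unitary ⟨K, hK⟩, hψ]
  rw [qf_proj Q hQ hQQ, qf_proj Q hQ hQQ]
  have bx := b _ (locK_unitary UA UB hUA hUB)
  have hbY := b _ (locK_unitary MA MB hMA hMB)
  have tri : √(nsq (Q *ᵥ (locK UA UB *ᵥ ψ))) ≤ √(nsq (Q *ᵥ (locK MA MB *ᵥ ψ))) + 2 * ε := by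
    rw [hsplit]
    refine (sqrt_nsq_add _ _).trans ?_
    gcongr
    refine (Real.sqrt_le_sqrt (nsq_proj_le Q hQ hQQ _)).trans ((sqrt_nsq_add _ _).trans ?_)
    have s1 := Real.sqrt_le_sqrt n1
    have s2 := Real.sqrt_le_sqrt n2
    rw [Real.sqrt_sq hε] at s1 s2
    linarith
  set X := nsq (Q *ᵥ (locK UA UB *ᵥ ψ))
  set Y := nsq (Q *ᵥ (locK MA MB *ᵥ ψ))
  have hX := Real.sq_sqrt (nsq_nonneg (Q *ᵥ (locK UA UB *ᵥ ψ)))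
  have hY := Real.sq_sqrt (nsq_nonneg (Q *ᵥ (locK MA MB *ᵥ ψ)))
  have x1 : √X ≤ 1 := Real.sqrt_le_one.2 bx
  have y1 : √Y ≤ 1 := Real.sqrt_le_one.2 hbY
  have x0 : 0 ≤ √X := Real.sqrt_nonneg _
  have y0 : 0 ≤ √Y := Real.sqrt_nonneg _
  change √X ^ 2 = X at hX
  change √Y ^ 2 = Y at hY
  rw [← hX, ← hY]
  nlinarith [mul_nonneg (sub_nonneg.2 tri) (add_nonneg x0 y0), mul_nonneg hε (by linarith : 0 ≤ 2 - √X - √Y)]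

end Assembly
section Final

variable {A B C : Type*} [DecidableEq A] [Fintype A] [DecidableEq B] [Fintype B]
  [DecidableEq C] [Fintype C]

lemma fixed_tail (i₀ : A × B × C) (μ : Measure (Matrix.unitaryGroup (A × B × C) ℂ))
    [μ.IsHaarMeasure] [IsProbabilityMeasure μ] (Q : Matrix (A × B × C) (A × B × C) ℂ)
    (hQ : Q.IsHermitian) (hQQ : Q * Q = Q) (p q : ℝ) (hp : 0 < p) (hpq : p < q) (hq : q < 1)
    (htr : Q.trace = ((p * Fintype.card (A × B × C) : ℝ) : ℂ))
    (K : Matrix (A × B × C) (A × B × C) ℂ) (hK : K ∈ Matrix.unitaryGroup (A × B × C) ℂ) :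
    μ {U | q ≤ qf Q (K *ᵥ fun i => U.1 i i₀)} ≤
      ENNReal.ofReal (Real.exp (-(2 * (q - p) ^ 2 * Fintype.card (A × B × C)))) := by
  simp only [qf_conj]
  have hKK : K * Kᴴ = 1 := Matrix.mem_unitaryGroup_iff.1 hK
  refine haar_tail i₀ μ (Kᴴ * Q * K) ?_ ?_ p q hp hpq hq ?_
  · exact Matrix.isHermitian_conjTranspose_mul_mul K hQ
  · calc Kᴴ * Q * K * (Kᴴ * Q * K) = Kᴴ * Q * (K * Kᴴ) * Q * K := by simp only [mul_assoc]
      _ = Kᴴ * Q * K := by rw [hKK, mul_one, mul_assoc Kᴴ, hQQ]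
  · rw [Matrix.trace_mul_comm, ← mul_assoc, hKK, one_mul, htr]

lemma lu_general [Nonempty A] [Nonempty B] (i₀ : A × B × C)
    (μ : Measure (Matrix.unitaryGroup (A × B × C) ℂ))
    [μ.IsHaarMeasure] [IsProbabilityMeasure μ] (Q : Matrix (A × B × C) (A × B × C) ℂ)
    (hQ : Q.IsHermitian) (hQQ : Q * Q = Q) (p δ η : ℝ) (hp : 0 < p) (hδ : 0 < δ)
    (hη : 0 < η) (hη1 : η < 1) (hpδ : p + δ ≤ 1)
    (htr : Q.trace = ((p * Fintype.card (A × B × C) : ℝ) : ℂ)) :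
    μ {U | ∃ UA : Matrix.unitaryGroup A ℂ, ∃ UB : Matrix.unitaryGroup B ℂ,
        p + δ ≤ qf Q (locK UA.1 UB.1 *ᵥ fun i => U.1 i i₀)} ≤
      ENNReal.ofReal ((12 / η * (1 / δ)) ^ (2 * Fintype.card A ^ 2 + 2 * Fintype.card B ^ 2) *
        Real.exp (-(2 * ((1 - η) * δ) ^ 2 * Fintype.card (A × B × C)))) := by
  set ε := η * δ / 4 with hεd
  have hε : 0 < ε := by positivity
  have hε1 : ε ≤ 1 := by nlinarith
  have e3 : 3 / ε = 12 / η * (1 / δ) := by rw [hεd]; field_simp; norm_num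
  obtain ⟨NA, a1, a2, a3⟩ := unitary_net (I := A) ε hε hε1
  obtain ⟨NB, b1, b2, b3⟩ := unitary_net (I := B) ε hε hε1
  rw [e3] at a2 b2
  set q := p + (1 - η) * δ with hq
  have hηδ : 0 < η * δ := by positivity
  have hsub : {U : Matrix.unitaryGroup (A × B × C) ℂ |
      ∃ UA : Matrix.unitaryGroup A ℂ, ∃ UB : Matrix.unitaryGroup B ℂ,
        p + δ ≤ qf Q (locK UA.1 UB.1 *ᵥ fun i => U.1 i i₀)} ⊆
      ⋃ MM ∈ NA ×ˢ NB, {U | q ≤ qf Q (locK MM.1 MM.2 *ᵥ fun i => U.1 i i₀)} := by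
    rintro U ⟨UA, UB, hU⟩
    obtain ⟨MA, hMA, hA⟩ := a3 UA.1 UA.2
    obtain ⟨MB, hMB, hB⟩ := b3 UB.1 UB.2
    simp only [Set.mem_iUnion, Set.mem_ofPred_eq]
    refine ⟨(MA, MB), Finset.mem_product.2 ⟨hMA, hMB⟩, ?_⟩
    have hψ : nsq (fun i => U.1 i i₀) = 1 := by
      have := nsq_unitary U (Pi.single i₀ 1)
      rw [Matrix.mulVec_single_one] at this
      refine this.trans ?_
      simp [nsq, Pi.single_apply, apply_ite norm, ite_pow]
    have := qf_lipschitz Q hQ hQQ UA.1 MA UB.1 MB UA.2 UB.2 (a1 _ hMA) (b1 _ hMB) ε hε.le hA hB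
      _ hψ
    simp only [hq]
    rw [hεd] at this
    linarith
  refine (measure_mono hsub).trans ((measure_biUnion_finset_le _ _).trans ?_)
  have hone : ∀ MM ∈ NA ×ˢ NB, μ {U | q ≤ qf Q (locK MM.1 MM.2 *ᵥ fun i => U.1 i i₀)} ≤
      ENNReal.ofReal (Real.exp (-(2 * ((1 - η) * δ) ^ 2 * Fintype.card (A × B × C)))) := by
    intro MM hMM
    obtain ⟨h1, h2⟩ := Finset.mem_product.1 hMM
    have hpos : 0 < (1 - η) * δ := mul_pos (by linarith) hδ
    have := fixed_tail i₀ μ Q hQ hQQ p q hp (by linarith) (by simp only [hq]; linarith) htr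
      (locK MM.1 MM.2) (locK_unitary _ _ (a1 _ h1) (b1 _ h2))
    rwa [show q - p = (1 - η) * δ by simp [hq]] at this
  refine (Finset.sum_le_sum hone).trans ?_
  rw [Finset.sum_const, nsmul_eq_mul, ← ENNReal.ofReal_natCast, ← ENNReal.ofReal_mul (by positivity)]
  refine ENNReal.ofReal_le_ofReal ?_
  gcongr
  rw [Finset.card_product, pow_add]
  push_cast
  gcongr

end Final

/-- **Theorem 3** (LU-distillation no-go).  For every `0 < c < 2` there is a
constant `C > 0` such that for all qubit numbers `n_A, n_B, n_C ≥ 1`, all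
`1 ≤ m ≤ min(n_A, n_B)` and all `h` with `δ := h² - 2^{-2m} > 0`, the Haar
probability that `m` EPR pairs are LU-distillable at fidelity `h` from the
reduced state `ρ_AB` of the Haar random state `U e₁` satisfies
`log Prob ≤ -c δ² d + C (d_A² + d_B²)(1 + log (1/δ))`, i.e.
`Prob ≤ exp(-c δ² d + C (d_A² + d_B²)(1 + log (1/δ)))`. -/
theorem lu_distillation_no_go (c : ℝ) (hc0 : 0 < c) (hc2 : c < 2) :
    ∃ C : ℝ, 0 < C ∧
      ∀ (nA nB nC : ℕ), 0 < nA → 0 < nB → 0 < nC →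
      ∀ m : ℕ, 1 ≤ m → m ≤ nA → m ≤ nB →
      ∀ h : ℝ, 0 < h ^ 2 - ((2 : ℝ) ^ (2 * m))⁻¹ →
      ∀ μ : Measure (Matrix.unitaryGroup (QubitIdx nA × QubitIdx nB × QubitIdx nC) ℂ),
        μ.IsHaarMeasure → IsProbabilityMeasure μ →
        μ {U | ∃ UA : Matrix.unitaryGroup (QubitIdx nA) ℂ,
               ∃ UB : Matrix.unitaryGroup (QubitIdx nB) ℂ,
               h ^ 2 ≤ (Matrix.trace ((UA.1 ⊗ₖ UB.1) * rhoAB (haarState U) *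
                          (UA.1 ⊗ₖ UB.1)ᴴ * eprProj nA nB m)).re}
          ≤ ENNReal.ofReal (Real.exp
              (-(c * (h ^ 2 - ((2 : ℝ) ^ (2 * m))⁻¹) ^ 2 * 2 ^ (nA + nB + nC))
                + C * (((2 : ℝ) ^ nA) ^ 2 + ((2 : ℝ) ^ nB) ^ 2) *
                  (1 + Real.log (1 / (h ^ 2 - ((2 : ℝ) ^ (2 * m))⁻¹))))) := by
  set η := (2 - c) / 4 with hη
  have hη0 : 0 < η := by rw [hη]; linarith
  have hη1 : η < 1 := by rw [hη]; linarith
  have hL : 0 < Real.log (12 / η) := Real.log_pos (by rw [lt_div_iff₀ hη0]; linarith)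
  refine ⟨2 * (Real.log (12 / η) + 1), by positivity, ?_⟩
  intro nA nB nC _ _ _ m hm hmA hmB h hδ μ hμ hμ'
  set p : ℝ := ((2 : ℝ) ^ (2 * m))⁻¹ with hpdef
  have hp : 0 < p := by positivity
  set δ := h ^ 2 - p with hδdef
  have hPh := extC_hermitian (C := QubitIdx nC) _ (eprProj_hermitian nA nB m)
  have hPP := extC_sq (C := QubitIdx nC) _ (eprProj_sq nA nB m hmA hmB)
  simp only [trace_eq_qf]
  by_cases h1 : h ^ 2 ≤ 1
  · have hδ1 : δ < 1 := by linarith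
    have hcard : (Fintype.card (QubitIdx nA × QubitIdx nB × QubitIdx nC) : ℝ)
        = 2 ^ (nA + nB + nC) := by
      simp [pow_add]; ring
    have htr : (extC (eprProj nA nB m) : Matrix (QubitIdx nA × QubitIdx nB × QubitIdx nC) _ ℂ).trace
        = ((p * Fintype.card (QubitIdx nA × QubitIdx nB × QubitIdx nC) : ℝ) : ℂ) := by
      rw [extC_trace, eprProj_trace nA nB m hmA hmB, ← hpdef]
      simp; ring
    have key := lu_general default μ _ hPh hPP p δ η hp hδ hη0 hη1 (by linarith) htr
    rw [show p + δ = h ^ 2 by rw [hδdef]; ring] at key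
    refine key.trans (ENNReal.ofReal_le_ofReal ?_)
    have hl : 0 ≤ Real.log (1 / δ) := Real.log_nonneg (by rw [le_div_iff₀ hδ]; linarith)
    have hpos : 0 < 12 / η * (1 / δ) := by positivity
    rw [← Real.exp_log (pow_pos hpos _), ← Real.exp_add, Real.log_pow,
      Real.log_mul (by positivity) (by positivity), hcard]
    refine Real.exp_le_exp.2 ?_
    have hcA : (Fintype.card (QubitIdx nA) : ℝ) = 2 ^ nA := by simp
    have hcB : (Fintype.card (QubitIdx nB) : ℝ) = 2 ^ nB := by simp
    push_cast
    rw [hcA, hcB]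
    have t1 : c * δ ^ 2 * 2 ^ (nA + nB + nC) ≤ 2 * ((1 - η) * δ) ^ 2 * 2 ^ (nA + nB + nC) := by
      refine mul_le_mul_of_nonneg_right ?_ (by positivity)
      have : c ≤ 2 * (1 - η) ^ 2 := by rw [hη]; nlinarith [sq_nonneg (2 - c)]
      nlinarith [mul_le_mul_of_nonneg_right this (sq_nonneg δ)]
    have t2 : Real.log (12 / η) + Real.log (1 / δ) ≤
        (Real.log (12 / η) + 1) * (1 + Real.log (1 / δ)) := by
      nlinarith [mul_nonneg hL.le hl]
    have t3 := mul_le_mul_of_nonneg_left t2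
      (by positivity : (0 : ℝ) ≤ 2 * (2 ^ nA) ^ 2 + 2 * (2 ^ nB) ^ 2)
    nlinarith [t1, t3]
  · have hempty : {U : Matrix.unitaryGroup (QubitIdx nA × QubitIdx nB × QubitIdx nC) ℂ |
        ∃ UA : Matrix.unitaryGroup (QubitIdx nA) ℂ, ∃ UB : Matrix.unitaryGroup (QubitIdx nB) ℂ,
        h ^ 2 ≤ qf (extC (eprProj nA nB m)) (locK UA.1 UB.1 *ᵥ haarState U)} = ∅ := by
      ext U
      simp only [Set.mem_ofPred_eq, Set.mem_empty_iff_false, iff_false, not_exists, not_le]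
      intro UA UB
      refine lt_of_le_of_lt ?_ (not_le.1 h1)
      rw [qf_proj _ hPh hPP]
      refine (nsq_proj_le _ hPh hPP _).trans ?_
      rw [nsq_unitary ⟨_, locK_unitary UA.1 UB.1 UA.2 UB.2⟩]
      have := nsq_unitary U (Pi.single default 1)
      rw [Matrix.mulVec_single_one] at this
      refine le_of_eq (this.trans ?_)
      simp [nsq, Pi.single_apply, apply_ite norm, ite_pow]
    rw [hempty]
    simp
end
end

section
/- Let d_A, d_B be positive integers, let μ be the Haar probability measure on the unitary group U(d_A·d_B), and for U ∈ U(d_A·d_B) let ρ_A(U) be the reduced density matrix on ℂ^{d_A} of the unit vector U e₁ ∈ ℂ^{d_A}⊗ℂ^{d_B}. Then the Haar-expected trace-norm distance of ρ_A from the maximally mixed state satisfies ∫ ‖ρ_A(U) − (1/d_A)I_{d_A}‖₁ dμ(U) ≤ √(d_A/d_B). -/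
/-!
The Page–Lubkin–Lloyd bound (Eq. (6) of the paper): for a Haar random bipartite
pure state `ψ = U e₁` on `ℂ^{d_A} ⊗ ℂ^{d_B}`, the Haar-expected trace-norm
distance of the reduced state `ρ_A` from the maximally mixed state satisfies
`E ‖ρ_A - I/d_A‖₁ ≤ √(d_A/d_B)`.
-/

open MeasureTheory Matrix
open scoped Classical

noncomputable section

/-- The trace norm of a Hermitian matrix: the sum of the absolute values of its
eigenvalues. -/
def traceNorm {n : Type*} [Fintype n] [DecidableEq n] (M : Matrix n n ℂ) : ℝ :=
  if hM : M.IsHermitian then ∑ i, |hM.eigenvalues i| else 0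

/-- Reduced density matrix on the first tensor factor of a bipartite vector:
`ρ_A[a,a'] = ∑_b ψ(a,b) conj (ψ(a',b))`. -/
def rhoA {IA IB : Type*} [Fintype IB] (ψ : IA × IB → ℂ) : Matrix IA IA ℂ :=
  Matrix.of fun a a' => ∑ b : IB, ψ (a, b) * (starRingEnd ℂ) (ψ (a', b))


section Aux

variable {n : Type} [Fintype n] [DecidableEq n]

open ComplexConjugate

lemma pll_compact : CompactSpace (Matrix.unitaryGroup n ℂ) := by
  refine isCompact_iff_compactSpace.1 (?_ : IsCompact (Matrix.unitaryGroup n ℂ : Set (Matrix n n ℂ)))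
  have hK : IsCompact (Set.pi Set.univ fun _ : n => Set.pi Set.univ fun _ : n =>
      Metric.closedBall (0 : ℂ) 1) :=
    isCompact_univ_pi fun _ => isCompact_univ_pi fun _ => isCompact_closedBall _ _
  refine IsCompact.of_isClosed_subset (s := {M : Matrix n n ℂ | ∀ i j, M i j ∈ Metric.closedBall (0 : ℂ) 1}) ?_
    (isClosed_unitary (R := Matrix n n ℂ)) ?_
  · have he : {M : Matrix n n ℂ | ∀ i j, M i j ∈ Metric.closedBall (0 : ℂ) 1} =
        (Set.pi Set.univ fun _ : n => Set.pi Set.univ fun _ : n =>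
          Metric.closedBall (0 : ℂ) 1 : Set (n → n → ℂ)) := by
      ext M
      exact ⟨fun h i _ j _ => h i j, fun h i j => h i trivial j trivial⟩
    rw [he]
    exact hK
  · intro U hU i j
    simpa using entry_norm_bound_of_unitary hU i j

/-- Fourth moment of column `k`. -/
def pllT (μ : Measure (Matrix.unitaryGroup n ℂ)) (k p q r s : n) : ℂ :=
  ∫ U : Matrix.unitaryGroup n ℂ, U.1 p k * conj (U.1 q k) * U.1 r k * conj (U.1 s k) ∂μ

lemma pll_cont (p k : n) : Continuous fun U : Matrix.unitaryGroup n ℂ => U.1 p k :=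
  (continuous_subtype_val).matrix_elem p k

lemma pll_int (μ : Measure (Matrix.unitaryGroup n ℂ)) [IsProbabilityMeasure μ] {E : Type*}
    [NormedAddCommGroup E] {f : Matrix.unitaryGroup n ℂ → E} [SecondCountableTopology E]
    (hf : Continuous f) :
    Integrable f μ := by
  have := pll_compact (n := n)
  exact hf.integrable_of_hasCompactSupport (HasCompactSupport.of_compactSpace f)

lemma pll_intT (μ : Measure (Matrix.unitaryGroup n ℂ)) [IsProbabilityMeasure μ] (k p q r s : n) :
    Integrable (fun U : Matrix.unitaryGroup n ℂ =>
      U.1 p k * conj (U.1 q k) * U.1 r k * conj (U.1 s k)) μ := by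
  apply pll_int
  have := pll_cont (n := n)
  exact (((this p k).mul (Complex.continuous_conj.comp (this q k))).mul (this r k)).mul
    (Complex.continuous_conj.comp (this s k))

/-- phase vector -/
def pllw (j t : n) : ℂ := if t = j then Complex.I else 1

lemma pll_phase (μ : Measure (Matrix.unitaryGroup n ℂ)) [μ.IsMulLeftInvariant] (j k p q r s : n) :
    pllT μ k p q r s = (pllw j p * conj (pllw j q) * pllw j r * conj (pllw j s)) *
      pllT μ k p q r s := by
  have hV : Matrix.diagonal (pllw j) ∈ Matrix.unitaryGroup n ℂ := by
    rw [Matrix.mem_unitaryGroup_iff, Matrix.star_eq_conjTranspose, Matrix.diagonal_conjTranspose,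
      Matrix.diagonal_mul_diagonal, ← Matrix.diagonal_one]
    congr 1
    ext t
    by_cases h : t = j <;> simp [pllw, h]
  have := integral_mul_left_eq_self (μ := μ) (fun U : Matrix.unitaryGroup n ℂ =>
    U.1 p k * conj (U.1 q k) * U.1 r k * conj (U.1 s k)) ⟨_, hV⟩
  unfold pllT
  rw [← integral_const_mul]
  rw [← this]
  congr 1
  ext U
  simp only [Submonoid.coe_mul, Matrix.diagonal_mul, map_mul]
  ring

lemma pll_zero_of (μ : Measure (Matrix.unitaryGroup n ℂ)) [μ.IsMulLeftInvariant] (j k p q r s : n)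
    (h : pllw j p * conj (pllw j q) * pllw j r * conj (pllw j s) ≠ 1) :
    pllT μ k p q r s = 0 := by
  have := pll_phase μ j k p q r s
  by_contra h0
  apply h
  exact mul_right_cancel₀ h0 (by rw [one_mul]; exact this.symm)

lemma pll_zero1 (μ : Measure (Matrix.unitaryGroup n ℂ)) [μ.IsMulLeftInvariant] (k p q r s : n)
    (h1 : q ≠ p) (h2 : r ≠ p) (h3 : s ≠ p) : pllT μ k p q r s = 0 := by
  apply pll_zero_of μ p
  simp [pllw, h1, h2, h3, Complex.ext_iff]

lemma pll_zero2 (μ : Measure (Matrix.unitaryGroup n ℂ)) [μ.IsMulLeftInvariant] (k p q : n)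
    (h1 : q ≠ p) : pllT μ k p q p q = 0 := by
  apply pll_zero_of μ p
  simp [pllw, h1, Complex.ext_iff]; norm_num

lemma pll_zero3 (μ : Measure (Matrix.unitaryGroup n ℂ)) [μ.IsMulLeftInvariant] (k p q : n)
    (h1 : q ≠ p) : pllT μ k p p p q = 0 := by
  apply pll_zero_of μ p
  simp [pllw, h1, Complex.ext_iff]

lemma pll_zero4 (μ : Measure (Matrix.unitaryGroup n ℂ)) [μ.IsMulLeftInvariant] (k p q : n)
    (h1 : q ≠ p) : pllT μ k p p q p = 0 := by
  apply pll_zero_of μ p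
  simp [pllw, h1, Complex.ext_iff]

lemma pll_rot (μ : Measure (Matrix.unitaryGroup n ℂ)) [IsProbabilityMeasure μ]
    [μ.IsMulLeftInvariant] (k p q : n) (hpq : q ≠ p) :
    pllT μ k p p p p = pllT μ k p p p p / 4 + pllT μ k q q q q / 4 + pllT μ k p p q q := by
  set P : Matrix n n ℂ := (Equiv.swap p q).permMatrix ℂ with hP
  have hPP : P * P = 1 := by
    rw [hP, ← Matrix.permMatrix_mul, Equiv.swap_mul_self, Matrix.permMatrix_one]
  have hPs : Pᴴ = P := by
    rw [hP, Matrix.conjTranspose_permMatrix, Equiv.swap_inv]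
  have hV : ((1 + Complex.I) / 2) • (1 : Matrix n n ℂ) + ((1 - Complex.I) / 2) • P
      ∈ Matrix.unitaryGroup n ℂ := by
    rw [Matrix.mem_unitaryGroup_iff, Matrix.star_eq_conjTranspose]
    simp only [Matrix.conjTranspose_add, Matrix.conjTranspose_smul, hPs, Matrix.conjTranspose_one,
      add_mul, mul_add, smul_mul_assoc, mul_smul_comm, hPP, one_mul, mul_one, smul_add, smul_smul]
    have e : ∀ a b c d : ℂ, a + d = 1 → b + c = 0 →
        a • (1 : Matrix n n ℂ) + b • P + (c • P + d • (1 : Matrix n n ℂ)) = 1 := by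
      intro a b c d h1 h2
      have : a • (1 : Matrix n n ℂ) + b • P + (c • P + d • (1 : Matrix n n ℂ)) =
        (a + d) • (1 : Matrix n n ℂ) + (b + c) • P := by module
      rw [this, h1, h2]; simp
    apply e
    · simp [Complex.ext_iff]; norm_num
    · simp [Complex.ext_iff]; norm_num
  have key := integral_mul_left_eq_self (μ := μ) (fun U : Matrix.unitaryGroup n ℂ =>
    U.1 p k * conj (U.1 p k) * U.1 p k * conj (U.1 p k)) ⟨_, hV⟩
  have hrow : ∀ U : Matrix.unitaryGroup n ℂ,
      ((⟨_, hV⟩ : Matrix.unitaryGroup n ℂ) * U).1 p k =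
      ((1 + Complex.I) / 2) * U.1 p k + ((1 - Complex.I) / 2) * U.1 q k := by
    intro U
    simp [Submonoid.coe_mul, add_mul, hP, Equiv.Perm.permMatrix, PEquiv.toMatrix_toPEquiv_mul]
  simp only [hrow] at key
  have i1 := pll_intT μ k
  have expand : ∀ x y : ℂ,
      ((1 + Complex.I) / 2 * x + (1 - Complex.I) / 2 * y) *
      conj ((1 + Complex.I) / 2 * x + (1 - Complex.I) / 2 * y) *
      ((1 + Complex.I) / 2 * x + (1 - Complex.I) / 2 * y) *
      conj ((1 + Complex.I) / 2 * x + (1 - Complex.I) / 2 * y) =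
      (1/4) * (x * conj x * x * conj x) + (1/4) * (y * conj y * y * conj y)
      + 1 * (x * conj x * y * conj y)
      + (-1/4) * (x * conj y * x * conj y) + (-1/4) * (y * conj x * y * conj x)
      + (Complex.I / 2) * (x * conj x * x * conj y) + (Complex.I / 2) * (x * conj y * y * conj y)
      + (-Complex.I / 2) * (x * conj x * y * conj x)
      + (-Complex.I / 2) * (y * conj y * y * conj x) := by
    intro x y
    have hI : Complex.I ^ 2 = -1 := Complex.I_sq
    have h1 : ((1 + Complex.I) / 2 * x + (1 - Complex.I) / 2 * y) *
      conj ((1 + Complex.I) / 2 * x + (1 - Complex.I) / 2 * y) =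
        (x * conj x + y * conj y) / 2 + Complex.I / 2 * (x * conj y) - Complex.I / 2 * (y * conj x) := by
      simp only [map_add, map_sub, map_mul, map_div₀, map_one, Complex.conj_I, map_ofNat]
      linear_combination (-(x * conj x)/4 - y * conj y/4 + x * conj y/4 + y * conj x/4) * hI
    rw [h1, mul_assoc, h1]
    linear_combination ((x * conj y)^2/4 + (y * conj x)^2/4 - x * conj x * y * conj y / 2) * hI
  simp only [expand] at key
  rw [integral_add, integral_add, integral_add, integral_add, integral_add, integral_add,
    integral_add, integral_add] at key
  · simp only [integral_const_mul] at key
    have z1 := pll_zero2 μ k p q hpq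
    have z2 := pll_zero2 μ k q p hpq.symm
    have z3 := pll_zero3 μ k p q hpq
    have z4 := pll_zero1 μ k p q q q hpq hpq hpq
    have z5 := pll_zero4 μ k p q hpq
    have z6 := pll_zero3 μ k q p hpq.symm
    simp only [pllT] at *
    rw [z1, z2, z3, z4, z5, z6] at key
    linear_combination -key
  all_goals
    repeat first | exact (i1 _ _ _ _).const_mul _ | apply Integrable.add

lemma pll_C (μ : Measure (Matrix.unitaryGroup n ℂ)) [IsProbabilityMeasure μ]
    [μ.IsMulLeftInvariant] (k p q : n) :
    pllT μ k p p q q = if p = q then pllT μ k k k k k else pllT μ k k k k k / 2 := by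
  have sw : ∀ p q, pllT μ k p p q q = pllT μ k q q p p := by
    intro p q
    unfold pllT
    congr 1; ext U; ring
  have hM : ∀ p q, pllT μ k p p p p = pllT μ k q q q q := by
    intro p q
    by_cases h : q = p
    · rw [h]
    · have a := pll_rot μ k p q h
      have b := pll_rot μ k q p (Ne.symm h)
      rw [sw q p] at b
      linear_combination a - b
  split_ifs with h
  · subst h; exact hM _ _
  · have a := pll_rot μ k p q (Ne.symm h)
    rw [hM p k, hM q k] at a
    linear_combination -a

lemma pll_norm (U : Matrix.unitaryGroup n ℂ) (k : n) : ∑ p, U.1 p k * conj (U.1 p k) = 1 := by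
  have h := congrFun (congrFun (Matrix.mem_unitaryGroup_iff'.1 U.2) k) k
  rw [Matrix.mul_apply] at h
  simp only [Matrix.one_apply_eq, Matrix.star_apply] at h
  rw [← h]
  refine Finset.sum_congr rfl fun p _ => ?_
  rw [mul_comm]; rfl

lemma pll_M (μ : Measure (Matrix.unitaryGroup n ℂ)) [IsProbabilityMeasure μ]
    [μ.IsMulLeftInvariant] (k : n) :
    pllT μ k k k k k * ((Fintype.card n : ℂ) * ((Fintype.card n : ℂ) + 1)) = 2 := by
  have h1 : ∑ p, ∑ q, pllT μ k p p q q = 1 := by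
    unfold pllT
    simp_rw [← integral_finsetSum Finset.univ (fun q _ => pll_intT μ k _ _ q q)]
    rw [← integral_finsetSum]
    · have : ∀ U : Matrix.unitaryGroup n ℂ,
          ∑ p, ∑ q, U.1 p k * conj (U.1 p k) * U.1 q k * conj (U.1 q k) = 1 := by
        intro U
        have := pll_norm U k
        calc _ = (∑ p, U.1 p k * conj (U.1 p k)) * (∑ p, U.1 p k * conj (U.1 p k)) := by
              rw [Finset.sum_mul_sum]; simp only [mul_assoc]
          _ = 1 := by rw [this, one_mul]
      simp [this]
    · intro p _
      exact integrable_finsetSum _ fun q _ => pll_intT μ k _ _ _ _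
  have h2 : ∀ p q : n, pllT μ k p p q q = pllT μ k k k k k / 2 +
      if p = q then pllT μ k k k k k / 2 else 0 := by
    intro p q
    rw [pll_C]; split_ifs <;> ring
  rw [Finset.sum_congr rfl fun p _ => Finset.sum_congr rfl fun q _ => h2 p q] at h1
  simp [Finset.sum_add_distrib] at h1
  linear_combination 2 * h1

lemma pll_traceNorm {M : Matrix n n ℂ} (hM : M.IsHermitian) :
    traceNorm M ^ 2 ≤ Fintype.card n * (∑ i, ∑ j, M i j * conj (M i j)).re := by
  have h0 : ∑ i, ∑ j, M i j * conj (M i j) = (M * M).trace := by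
    simp only [Matrix.trace, Matrix.mul_apply, Matrix.diag_apply]
    refine Finset.sum_congr rfl fun i _ => Finset.sum_congr rfl fun j _ => ?_
    rw [← hM.apply j i]
    rfl
  have h1 : (M * M).trace = ∑ i, ((hM.eigenvalues i : ℂ)) ^ 2 := by
    conv_lhs => rw [hM.spectral_theorem]
    rw [← map_mul, Unitary.conjStarAlgAut_apply, Matrix.trace_mul_comm, ← mul_assoc]
    simp [Matrix.trace, sq]
  rw [h0, h1, traceNorm, dif_pos hM]
  refine sq_sum_le_card_mul_sum_sq.trans (le_of_eq ?_)
  simp only [sq_abs]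
  rw [Finset.card_univ]
  congr 1
  rw [← Complex.ofReal_re (∑ i, hM.eigenvalues i ^ 2)]
  push_cast
  rfl

lemma pll_rhoT {dA dB : ℕ} (μ : Measure (Matrix.unitaryGroup (Fin dA × Fin dB) ℂ))
    [IsProbabilityMeasure μ] [μ.IsMulLeftInvariant] (k : Fin dA × Fin dB)
    (a a' : Fin dA) (b b' : Fin dB) :
    pllT μ k (a, b) (a', b) (a', b') (a, b') =
      pllT μ k k k k k / 2 * ((if a = a' then 1 else 0) + (if b = b' then 1 else 0)) := by
  by_cases ha : a = a'
  · subst ha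
    rw [pll_C]
    by_cases hb : b = b' <;> simp [hb]
    ring
  · by_cases hb : b = b'
    · subst hb
      have : pllT μ k (a, b) (a', b) (a', b) (a, b) = pllT μ k (a, b) (a, b) (a', b) (a', b) := by
        unfold pllT; congr 1; ext U; ring
      rw [this, pll_C]
      simp [ha]
    · rw [pll_zero1]
      · simp [ha, hb]
      all_goals simp [ha, hb, eq_comm]

/-- Purity of the reduced state. -/
def pllS {dA dB : ℕ} (k : Fin dA × Fin dB) (U : Matrix.unitaryGroup (Fin dA × Fin dB) ℂ) : ℂ :=
  ∑ a, ∑ a', rhoA (fun p => U.1 p k) a a' * conj (rhoA (fun p => U.1 p k) a a')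

lemma pllS_eq {dA dB : ℕ} (k : Fin dA × Fin dB)
    (U : Matrix.unitaryGroup (Fin dA × Fin dB) ℂ) :
    pllS k U = ∑ a, ∑ a', ∑ b, ∑ b', U.1 (a, b) k * conj (U.1 (a', b) k) *
      U.1 (a', b') k * conj (U.1 (a, b') k) := by
  unfold pllS
  refine Finset.sum_congr rfl fun a _ => Finset.sum_congr rfl fun a' _ => ?_
  simp only [rhoA, Matrix.of_apply, map_sum, Finset.sum_mul_sum, map_mul, Complex.conj_conj]
  refine Finset.sum_congr rfl fun b _ => Finset.sum_congr rfl fun b' _ => ?_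
  ring

lemma pllS_int {dA dB : ℕ} (μ : Measure (Matrix.unitaryGroup (Fin dA × Fin dB) ℂ))
    [IsProbabilityMeasure μ] (k : Fin dA × Fin dB) : Integrable (pllS k) μ := by
  rw [show pllS k = _ from funext (pllS_eq k)]
  exact integrable_finsetSum _ fun a _ => integrable_finsetSum _ fun a' _ =>
    integrable_finsetSum _ fun b _ => integrable_finsetSum _ fun b' _ => pll_intT μ k _ _ _ _

lemma pllS_integral {dA dB : ℕ} (μ : Measure (Matrix.unitaryGroup (Fin dA × Fin dB) ℂ))
    [IsProbabilityMeasure μ] [μ.IsMulLeftInvariant] (k : Fin dA × Fin dB) :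
    (∫ U, pllS k U ∂μ) * ((dA : ℂ) * dB + 1) = dA + dB := by
  have hA : (dA : ℂ) ≠ 0 := by
    have := k.1.pos; exact_mod_cast this.ne'
  have hB : (dB : ℂ) ≠ 0 := by
    have := k.2.pos; exact_mod_cast this.ne'
  have h1 : ∫ U, pllS k U ∂μ = ∑ a, ∑ a', ∑ b, ∑ b',
      pllT μ k (a, b) (a', b) (a', b') (a, b') := by
    simp_rw [pllS_eq]
    rw [integral_finsetSum _ fun a _ => integrable_finsetSum _ fun a' _ =>
      integrable_finsetSum _ fun b _ => integrable_finsetSum _ fun b' _ => pll_intT μ k _ _ _ _]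
    refine Finset.sum_congr rfl fun a _ => ?_
    rw [integral_finsetSum _ fun a' _ =>
      integrable_finsetSum _ fun b _ => integrable_finsetSum _ fun b' _ => pll_intT μ k _ _ _ _]
    refine Finset.sum_congr rfl fun a' _ => ?_
    rw [integral_finsetSum _ fun b _ => integrable_finsetSum _ fun b' _ => pll_intT μ k _ _ _ _]
    refine Finset.sum_congr rfl fun b _ => ?_
    rw [integral_finsetSum _ fun b' _ => pll_intT μ k _ _ _ _]
    rfl
  have h2 : ∫ U, pllS k U ∂μ = pllT μ k k k k k / 2 * (dA * dB * dB + dA * dA * dB) := by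
    rw [h1]
    simp_rw [pll_rhoT, ← Finset.mul_sum, Finset.sum_add_distrib]
    simp
    left
    ring
  have h3 := pll_M μ k
  simp only [Fintype.card_prod, Fintype.card_fin, Nat.cast_mul] at h3
  rw [h2]
  linear_combination (dA + dB : ℂ) / 2 * h3

lemma pll_herm {dA dB : ℕ} (ψ : Fin dA × Fin dB → ℂ) :
    (rhoA ψ - ((dA : ℂ))⁻¹ • (1 : Matrix (Fin dA) (Fin dA) ℂ)).IsHermitian := by
  apply Matrix.IsHermitian.sub
  · ext a a'
    simp [rhoA, mul_comm]
  · ext a a'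
    by_cases h : a = a'
    · subst h; simp
    · simp [h, Ne.symm h]

lemma pll_sub {dA dB : ℕ} (k : Fin dA × Fin dB)
    (U : Matrix.unitaryGroup (Fin dA × Fin dB) ℂ) :
    (∑ a, ∑ a', (rhoA (fun p => U.1 p k) - ((dA : ℂ))⁻¹ • (1 : Matrix (Fin dA) (Fin dA) ℂ)) a a' *
      conj ((rhoA (fun p => U.1 p k) - ((dA : ℂ))⁻¹ • (1 : Matrix (Fin dA) (Fin dA) ℂ)) a a'))
      = pllS k U - (dA : ℂ)⁻¹ := by
  have hA : (dA : ℂ) ≠ 0 := by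
    have := k.1.pos; exact_mod_cast this.ne'
  have htr : ∑ a, rhoA (fun p => U.1 p k) a a = 1 := by
    rw [← pll_norm U k, Fintype.sum_prod_type]
    rfl
  have htr' : ∑ a, conj (rhoA (fun p => U.1 p k) a a) = 1 := by
    rw [← map_sum, htr, map_one]
  unfold pllS
  generalize rhoA (fun p => U.1 p k) = R at *
  have : ∀ a a', (R - ((dA : ℂ))⁻¹ • (1 : Matrix (Fin dA) (Fin dA) ℂ)) a a' *
      conj ((R - ((dA : ℂ))⁻¹ • (1 : Matrix (Fin dA) (Fin dA) ℂ)) a a') =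
      R a a' * conj (R a a') + if a = a' then
        ((dA : ℂ)⁻¹ * (dA : ℂ)⁻¹ - (dA : ℂ)⁻¹ * R a a - (dA : ℂ)⁻¹ * conj (R a a)) else 0 := by
    intro a a'
    by_cases h : a = a'
    · subst h; simp; ring
    · simp [h]
  simp_rw [this, Finset.sum_add_distrib]
  simp only [Finset.sum_ite_eq, Finset.mem_univ, if_true, Finset.sum_sub_distrib, ← Finset.mul_sum,
    htr, htr']
  simp
  field_simp
  ring

end Aux

/-- **Page–Lubkin–Lloyd bound.** For `ψ = U e₁` a Haar random state on
`ℂ^{d_A} ⊗ ℂ^{d_B}` (with `e₁` a fixed standard basis vector), the Haar-expected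
trace-norm distance of `ρ_A` from the maximally mixed state is at most
`√(d_A/d_B)`. -/
theorem page_lubkin_lloyd_bound (dA dB : ℕ) (hdA : 0 < dA) (hdB : 0 < dB)
    (μ : Measure (Matrix.unitaryGroup (Fin dA × Fin dB) ℂ))
    (hHaar : μ.IsHaarMeasure) (hProb : IsProbabilityMeasure μ) :
    (∫ U : Matrix.unitaryGroup (Fin dA × Fin dB) ℂ,
        traceNorm (rhoA (fun p => U.1 p (⟨0, hdA⟩, ⟨0, hdB⟩))
          - ((dA : ℂ))⁻¹ • (1 : Matrix (Fin dA) (Fin dA) ℂ)) ∂μ)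
      ≤ Real.sqrt ((dA : ℝ) / (dB : ℝ)) := by
  have hmul : μ.IsMulLeftInvariant := inferInstance
  set k : Fin dA × Fin dB := (⟨0, hdA⟩, ⟨0, hdB⟩) with hk
  have hA : (0 : ℝ) < dA := by exact_mod_cast hdA
  have hB : (0 : ℝ) < dB := by exact_mod_cast hdB
  set c : ℝ := Real.sqrt ((dA : ℝ) / (dB : ℝ)) with hc
  have hc0 : 0 < c := Real.sqrt_pos.2 (by positivity)
  have hc2 : c ^ 2 = dA / dB := Real.sq_sqrt (by positivity)
  have hnn : ∀ M : Matrix (Fin dA) (Fin dA) ℂ, 0 ≤ traceNorm M := by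
    intro M
    unfold traceNorm
    split_ifs
    · positivity
    · exact le_rfl
  have hSre : Integrable (fun U => (pllS k U).re) μ := (pllS_int μ k).re
  have hES : (∫ U, (pllS k U).re ∂μ) * ((dA : ℝ) * dB + 1) = dA + dB := by
    have h := congrArg Complex.re (pllS_integral μ k)
    have h' : ∫ U, (pllS k U).re ∂μ = (∫ U, pllS k U ∂μ).re := integral_re (pllS_int μ k)
    rw [h']
    simpa using h
  have hbound : ∀ U : Matrix.unitaryGroup (Fin dA × Fin dB) ℂ,
      traceNorm (rhoA (fun p => U.1 p k) - ((dA : ℂ))⁻¹ • (1 : Matrix (Fin dA) (Fin dA) ℂ)) ≤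
        (dA * ((pllS k U).re - (dA : ℝ)⁻¹) / c + c) / 2 := by
    intro U
    have h1 := pll_traceNorm (pll_herm (fun p => U.1 p k))
    rw [pll_sub k U] at h1
    have h2 : (pllS k U - (dA : ℂ)⁻¹).re = (pllS k U).re - (dA : ℝ)⁻¹ := by
      rw [Complex.sub_re, ← Complex.ofReal_natCast, ← Complex.ofReal_inv, Complex.ofReal_re]
    rw [h2, Fintype.card_fin] at h1
    generalize traceNorm (rhoA (fun p => U.1 p k) -
      ((dA : ℂ))⁻¹ • (1 : Matrix (Fin dA) (Fin dA) ℂ)) = t at *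
    have h3 : t ^ 2 / c ≤ dA * ((pllS k U).re - (dA : ℝ)⁻¹) / c := by gcongr
    have h4 : t ≤ (t ^ 2 / c + c) / 2 := by
      have : t ^ 2 / c + c - 2 * t = (t - c) ^ 2 / c := by field_simp; ring
      have : 0 ≤ (t - c) ^ 2 / c := by positivity
      linarith
    linarith
  have hgi : Integrable (fun U => (dA * ((pllS k U).re - (dA : ℝ)⁻¹) / c + c) / 2) μ :=
    (((((hSre.sub (integrable_const _)).const_mul _).div_const _).add (integrable_const _)).div_const _)
  refine (integral_mono_of_nonneg (Filter.Eventually.of_forall fun U => hnn _) hgi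
    (Filter.Eventually.of_forall hbound)).trans ?_
  have hgi2 : Integrable (fun U => dA * ((pllS k U).re - (dA : ℝ)⁻¹) / c) μ :=
    ((hSre.sub (integrable_const _)).const_mul _).div_const _
  rw [integral_div, integral_add hgi2 (integrable_const _), integral_div, integral_const_mul,
    integral_sub hSre (integrable_const _)]
  simp only [integral_const, probReal_univ, one_smul]
  generalize ∫ U, (pllS k U).re ∂μ = e at *
  have he : dA * (e - (dA : ℝ)⁻¹) ≤ c ^ 2 := by
    rw [hc2]
    have : e = (dA + dB) / ((dA : ℝ) * dB + 1) := by
      rw [eq_div_iff (by positivity)]; exact hES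
    have h5 : e ≤ (dA + dB) / ((dA : ℝ) * dB) := by
      rw [this]
      gcongr
      linarith
    calc dA * (e - (dA : ℝ)⁻¹) ≤ dA * ((dA + dB) / ((dA : ℝ) * dB) - (dA : ℝ)⁻¹) := by gcongr
      _ = dA / dB := by field_simp; ring
  have h6 : dA * (e - (dA : ℝ)⁻¹) / c ≤ c := by
    rw [div_le_iff₀ hc0]; linarith
  linarith
end
end

section
/- Let d_A, d_B be positive integers, let μ be the Haar probability measure on the unitary group U(d_A·d_B), and for U ∈ U(d_A·d_B) let ρ_A(U) be the reduced density matrix on ℂ^{d_A} of the unit vector U e₁ ∈ ℂ^{d_A}⊗ℂ^{d_B}. Then the Haar-expected purity is exactly ∫ Tr(ρ_A(U)²) dμ(U) = (d_A + d_B)/(d_A·d_B + 1). -/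
/-!
Lubkin's exact second-moment formula: for a Haar random bipartite pure state
`ψ = U e₁` on `ℂ^{d_A} ⊗ ℂ^{d_B}`, the Haar-expected purity of the reduced state
is exactly `E Tr(ρ_A²) = (d_A + d_B)/(d_A d_B + 1)`.
-/

open MeasureTheory Matrix

noncomputable section

section Helpers

variable {I : Type*} [Fintype I] [DecidableEq I]

lemma lub_householder (w : I → ℂ) (t : ℝ) (h : (t : ℂ) * (star w ⬝ᵥ w) = 2) :
    (1 - (t : ℂ) • Matrix.vecMulVec w (star w)) ∈ Matrix.unitaryGroup I ℂ := by
  rw [Matrix.mem_unitaryGroup_iff]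
  have hs : star (1 - (t : ℂ) • Matrix.vecMulVec w (star w))
      = 1 - (t : ℂ) • Matrix.vecMulVec w (star w) := by
    rw [Matrix.star_eq_conjTranspose]
    ext p q
    simp [Matrix.vecMulVec_apply, Matrix.one_apply, eq_comm, mul_comm]
  have hv : Matrix.vecMulVec w (star w) * Matrix.vecMulVec w (star w)
      = (star w ⬝ᵥ w) • Matrix.vecMulVec w (star w) := by
    rw [Matrix.vecMulVec_mul_vecMulVec]
    ext p q
    simp [Matrix.vecMulVec_apply]
    try ring
  rw [hs, mul_sub, sub_mul, sub_mul, mul_one, one_mul, mul_one, smul_mul_smul_comm, hv, smul_smul,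
    mul_assoc, h]
  module

lemma lub_apply (w : I → ℂ) (t : ℝ) (x : I → ℂ) (p : I) :
    ((1 - (t : ℂ) • Matrix.vecMulVec w (star w)) *ᵥ x) p = x p - t * w p * (star w ⬝ᵥ x) := by
  rw [Matrix.sub_mulVec, Matrix.smul_mulVec, Matrix.one_mulVec, Matrix.vecMulVec_mulVec]
  simp
  ring

variable (μ : Measure (Matrix.unitaryGroup I ℂ))

lemma lub_integrable [IsProbabilityMeasure μ] (e : I) (f : (I → ℂ) → ℝ) (hf : Continuous f) :
    Integrable (fun U : Matrix.unitaryGroup I ℂ => f (fun p => U.1 p e)) μ := by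
  obtain ⟨C, hC⟩ := (isCompact_closedBall (0 : I → ℂ) 1).exists_bound_of_continuousOn
    hf.continuousOn
  refine Integrable.of_bound (C := C) ?_ (Filter.Eventually.of_forall fun U => hC _ ?_)
  · have : Continuous (fun U : Matrix.unitaryGroup I ℂ => f (fun p => U.1 p e)) := by
      apply hf.comp
      refine continuous_pi fun p => ?_
      exact (continuous_subtype_val).matrix_elem p e
    exact this.measurable.aestronglyMeasurable
  · rw [mem_closedBall_zero_iff, pi_norm_le_iff_of_nonneg zero_le_one]
    intro p
    exact entry_norm_bound_of_unitary U.2 p e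

lemma lub_inv [μ.IsHaarMeasure] (e : I) (f : (I → ℂ) → ℝ) (V : Matrix I I ℂ)
    (hV : V ∈ Matrix.unitaryGroup I ℂ) :
    ∫ U : Matrix.unitaryGroup I ℂ, f (V *ᵥ (fun p => U.1 p e)) ∂μ
      = ∫ U : Matrix.unitaryGroup I ℂ, f (fun p => U.1 p e) ∂μ := by
  have := integral_mul_left_eq_self (μ := μ)
    (fun U : Matrix.unitaryGroup I ℂ => f (fun p => U.1 p e)) ⟨V, hV⟩
  rw [← this]
  rfl

/-- second moments of the squared moduli -/
def lubP (e i j : I) : ℝ :=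
  ∫ U : Matrix.unitaryGroup I ℂ, Complex.normSq (U.1 i e) * Complex.normSq (U.1 j e) ∂μ

lemma lub_zero [μ.IsHaarMeasure] (e i j k l : I) (hj : j ≠ i) (hk : k ≠ i) (hl : l ≠ i) :
    ∫ U : Matrix.unitaryGroup I ℂ, (U.1 i e * (starRingEnd ℂ) (U.1 j e) *
      (U.1 k e * (starRingEnd ℂ) (U.1 l e))).re ∂μ = 0 := by
  have h := lub_inv μ e (fun x => (x i * (starRingEnd ℂ) (x j) *
      (x k * (starRingEnd ℂ) (x l))).re) _
      (lub_householder (Pi.single i 1) 2 (by simp))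
  simp only [lub_apply] at h
  simp only [Pi.single_eq_same, Pi.single_eq_of_ne hj, Pi.single_eq_of_ne hk,
    Pi.single_eq_of_ne hl, ← Pi.single_star, single_dotProduct, star_one] at h
  have h2 : ∀ U : Matrix.unitaryGroup I ℂ, ((U.1 i e - ((2 : ℝ) : ℂ) * 1 * (1 * U.1 i e)) *
      (starRingEnd ℂ) (U.1 j e - ((2 : ℝ) : ℂ) * 0 * (1 * U.1 i e)) *
      ((U.1 k e - ((2 : ℝ) : ℂ) * 0 * (1 * U.1 i e)) *
      (starRingEnd ℂ) (U.1 l e - ((2 : ℝ) : ℂ) * 0 * (1 * U.1 i e)))).re =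
      - (U.1 i e * (starRingEnd ℂ) (U.1 j e) *
      (U.1 k e * (starRingEnd ℂ) (U.1 l e))).re := by
    intro U
    rw [← Complex.neg_re]
    congr 1
    simp
    ring
  simp only [h2, integral_neg] at h
  linarith

lemma lub_rot_one [μ.IsHaarMeasure] (e i j : I) (hij : i ≠ j) (c : ℂ)
    (hc : (starRingEnd ℂ) c * c = 1) :
    ∫ U : Matrix.unitaryGroup I ℂ,
      Complex.normSq (3 * U.1 i e - 4 * (starRingEnd ℂ) c * U.1 j e) ^ 2 ∂μ
      = 625 * lubP μ e i i := by
  have hw : ∀ x : I → ℂ, star (Pi.single i 1 + Pi.single j (2 * c) : I → ℂ) ⬝ᵥ x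
      = x i + 2 * (starRingEnd ℂ) c * x j := by
    intro x
    rw [star_add, add_dotProduct, ← Pi.single_star, ← Pi.single_star, single_dotProduct,
      single_dotProduct]
    simp
  have h := lub_inv μ e (fun x => Complex.normSq (x i) * Complex.normSq (x i)) _
      (lub_householder (Pi.single i 1 + Pi.single j (2 * c)) (2 / 5) (by
        rw [hw]
        simp [hij, hij.symm]
        linear_combination (8 / 5 : ℂ) * hc))
  simp only [lub_apply, hw] at h
  rw [lubP, ← h, ← integral_const_mul]
  congr 1
  ext U
  have : U.1 i e - ((2 / 5 : ℝ) : ℂ) * (Pi.single i 1 + Pi.single j (2 * c) : I → ℂ) i *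
      (U.1 i e + 2 * (starRingEnd ℂ) c * U.1 j e)
      = ((1 / 5 : ℝ) : ℂ) * (3 * U.1 i e - 4 * (starRingEnd ℂ) c * U.1 j e) := by
    simp [hij]
    ring
  rw [this, Complex.normSq_mul, Complex.normSq_ofReal]
  ring

lemma lub_rot [μ.IsHaarMeasure] [IsProbabilityMeasure μ] (e i j : I) (hij : i ≠ j) :
    625 * lubP μ e i i = 81 * lubP μ e i i + 256 * lubP μ e j j + 576 * lubP μ e i j := by
  have h1 := lub_rot_one μ e i j hij 1 (by simp)
  have h2 := lub_rot_one μ e i j hij (-1) (by simp)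
  have h3 := lub_rot_one μ e i j hij Complex.I (by simp)
  have h4 := lub_rot_one μ e i j hij (-Complex.I) (by simp)
  have int : ∀ c : ℂ, Integrable (fun U : Matrix.unitaryGroup I ℂ =>
      Complex.normSq (3 * U.1 i e - 4 * (starRingEnd ℂ) c * U.1 j e) ^ 2) μ := fun c =>
    lub_integrable μ e (fun x => Complex.normSq (3 * x i - 4 * (starRingEnd ℂ) c * x j) ^ 2)
      (by have := Complex.continuous_normSq; fun_prop)
  have intP : ∀ i j : I, Integrable (fun U : Matrix.unitaryGroup I ℂ =>
      Complex.normSq (U.1 i e) * Complex.normSq (U.1 j e)) μ := fun i j =>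
    lub_integrable μ e (fun x => Complex.normSq (x i) * Complex.normSq (x j))
      (by have := Complex.continuous_normSq; fun_prop)
  have key : (∫ U : Matrix.unitaryGroup I ℂ,
      (Complex.normSq (3 * U.1 i e - 4 * (starRingEnd ℂ) 1 * U.1 j e) ^ 2
      + Complex.normSq (3 * U.1 i e - 4 * (starRingEnd ℂ) (-1) * U.1 j e) ^ 2
      + Complex.normSq (3 * U.1 i e - 4 * (starRingEnd ℂ) Complex.I * U.1 j e) ^ 2
      + Complex.normSq (3 * U.1 i e - 4 * (starRingEnd ℂ) (-Complex.I) * U.1 j e) ^ 2) ∂μ)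
      = ∫ U : Matrix.unitaryGroup I ℂ, (324 * (Complex.normSq (U.1 i e) * Complex.normSq (U.1 i e))
        + 1024 * (Complex.normSq (U.1 j e) * Complex.normSq (U.1 j e))
        + 2304 * (Complex.normSq (U.1 i e) * Complex.normSq (U.1 j e))) ∂μ := by
    congr 1
    ext U
    simp [Complex.normSq_apply]
    ring
  rw [integral_add (((int _).fun_add (int _)).fun_add (int _)) (int _),
    integral_add ((int _).fun_add (int _)) (int _), integral_add (int _) (int _), h1, h2, h3, h4,
    integral_add (((intP _ _).const_mul _).fun_add ((intP _ _).const_mul _)) ((intP _ _).const_mul _),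
    integral_add ((intP _ _).const_mul _) ((intP _ _).const_mul _), integral_const_mul,
    integral_const_mul, integral_const_mul] at key
  change _ = 324 * lubP μ e i i + 1024 * lubP μ e j j + 2304 * lubP μ e i j at key
  linarith

lemma lubP_comm (e i j : I) : lubP μ e i j = lubP μ e j i := by
  simp only [lubP, mul_comm]

lemma lubP_eq [μ.IsHaarMeasure] [IsProbabilityMeasure μ] (e i j : I) :
    lubP μ e i j = lubP μ e e e / 2 * (1 + if i = j then 1 else 0) := by
  have A : ∀ i j : I, i ≠ j → lubP μ e i i = lubP μ e j j ∧ lubP μ e i i = 2 * lubP μ e i j := by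
    intro i j hij
    have h1 := lub_rot μ e i j hij
    have h2 := lub_rot μ e j i hij.symm
    rw [lubP_comm μ e j i] at h2
    constructor <;> linarith
  have B : ∀ i, lubP μ e i i = lubP μ e e e := by
    intro i
    by_cases h : i = e
    · rw [h]
    · exact (A i e h).1
  split_ifs with h
  · subst h
    rw [B]; ring
  · have := (A i j h).2
    rw [B] at this
    linarith

lemma lub_norm [μ.IsHaarMeasure] [IsProbabilityMeasure μ] (e : I) :
    lubP μ e e e / 2 * (Fintype.card I * (Fintype.card I + 1)) = 1 := by
  have intP : ∀ i j : I, Integrable (fun U : Matrix.unitaryGroup I ℂ =>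
      Complex.normSq (U.1 i e) * Complex.normSq (U.1 j e)) μ := fun i j =>
    lub_integrable μ e (fun x => Complex.normSq (x i) * Complex.normSq (x j))
      (by have := Complex.continuous_normSq; fun_prop)
  have h1 : ∀ U : Matrix.unitaryGroup I ℂ, ∑ i, Complex.normSq (U.1 i e) = 1 := by
    intro U
    have := congrFun (congrFun (Matrix.mem_unitaryGroup_iff'.1 U.2) e) e
    rw [Matrix.mul_apply] at this
    simp only [Matrix.star_apply, Matrix.one_apply_eq] at this
    have h3 := congrArg Complex.re this
    rw [Complex.re_sum] at h3
    rw [Complex.one_re] at h3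
    rw [← h3]
    refine Finset.sum_congr rfl fun i _ => ?_
    simp [Complex.normSq_apply]
  have h2 : ∑ i, ∑ j, lubP μ e i j = 1 := by
    unfold lubP
    simp only [← integral_finsetSum Finset.univ (fun j _ => intP _ j)]
    rw [← integral_finsetSum]
    · simp only [← Finset.sum_mul_sum, h1]
      simp
    · intro i _
      exact integrable_finsetSum _ (fun j _ => intP i j)
  rw [Finset.sum_congr rfl fun i _ => Finset.sum_congr rfl fun j _ => lubP_eq μ e i j] at h2
  simp only [← Finset.mul_sum] at h2
  refine Eq.trans ?_ h2
  congr 1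
  simp [Finset.sum_add_distrib]
  try ring

end Helpers

/-- **Lubkin's formula.** For `ψ = U e₁` a Haar random state on
`ℂ^{d_A} ⊗ ℂ^{d_B}` (with `e₁` a fixed standard basis vector), the Haar-expected
purity of the reduced state `ρ_A` is exactly `(d_A + d_B)/(d_A d_B + 1)`. -/
theorem lubkin_purity_formula (dA dB : ℕ) (hdA : 0 < dA) (hdB : 0 < dB)
    (μ : Measure (Matrix.unitaryGroup (Fin dA × Fin dB) ℂ))
    (hHaar : μ.IsHaarMeasure) (hProb : IsProbabilityMeasure μ) :
    (∫ U : Matrix.unitaryGroup (Fin dA × Fin dB) ℂ,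
        (Matrix.trace (rhoA (fun p => U.1 p (⟨0, hdA⟩, ⟨0, hdB⟩)) *
                       rhoA (fun p => U.1 p (⟨0, hdA⟩, ⟨0, hdB⟩)))).re ∂μ)
      = ((dA : ℝ) + (dB : ℝ)) / ((dA : ℝ) * (dB : ℝ) + 1) := by
  classical
  set e : Fin dA × Fin dB := (⟨0, hdA⟩, ⟨0, hdB⟩) with he
  have hT : ∀ U : Matrix.unitaryGroup (Fin dA × Fin dB) ℂ,
      (Matrix.trace (rhoA (fun p => U.1 p e) * rhoA (fun p => U.1 p e))).re
      = ∑ a, ∑ a', ∑ b, ∑ b', (U.1 (a, b) e * (starRingEnd ℂ) (U.1 (a', b) e) *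
        (U.1 (a', b') e * (starRingEnd ℂ) (U.1 (a, b') e))).re := by
    intro U
    simp only [Matrix.trace, Matrix.diag, Matrix.mul_apply, rhoA, Matrix.of_apply,
      Finset.sum_mul_sum, Complex.re_sum]
  have hI : ∀ i j k l, Integrable (fun U : Matrix.unitaryGroup (Fin dA × Fin dB) ℂ =>
      (U.1 i e * (starRingEnd ℂ) (U.1 j e) * (U.1 k e * (starRingEnd ℂ) (U.1 l e))).re) μ :=
    fun i j k l => lub_integrable μ e
      (fun x => (x i * (starRingEnd ℂ) (x j) * (x k * (starRingEnd ℂ) (x l))).re) (by fun_prop)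
  have hV : ∀ a a' b b', ∫ U : Matrix.unitaryGroup (Fin dA × Fin dB) ℂ,
      (U.1 (a, b) e * (starRingEnd ℂ) (U.1 (a', b) e) *
        (U.1 (a', b') e * (starRingEnd ℂ) (U.1 (a, b') e))).re ∂μ
      = lubP μ e e e / 2 * ((if a = a' then 1 else 0) + (if b = b' then 1 else 0)) := by
    intro a a' b b'
    by_cases ha : a = a'
    · subst ha
      have := lubP_eq μ e (a, b) (a, b')
      simp only [Prod.mk.injEq, true_and] at this
      rw [if_pos rfl, ← this, lubP]
      congr 1
      ext U
      simp only [Complex.mul_conj]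
      rw [← Complex.ofReal_mul, Complex.ofReal_re]
    · by_cases hb : b = b'
      · subst hb
        have := lubP_eq μ e (a, b) (a', b)
        simp only [Prod.mk.injEq, and_true, ha, if_false, add_zero] at this
        rw [if_neg ha, if_pos rfl, zero_add, ← this, lubP]
        congr 1
        ext U
        simp [Complex.normSq_apply]
        ring
      · rw [lub_zero μ e]
        · simp [ha, hb]
        · simp [eq_comm, ha]
        · simp [eq_comm, ha]
        · simp [eq_comm, hb]
  simp only [hT]
  rw [integral_finsetSum]
  swap
  · intro a _
    refine integrable_finsetSum _ fun a' _ => integrable_finsetSum _ fun b _ => ?_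
    exact integrable_finsetSum _ fun b' _ => hI (a, b) (a', b) (a', b') (a, b')
  have hS : ∀ a, ∫ U : Matrix.unitaryGroup (Fin dA × Fin dB) ℂ,
      ∑ a', ∑ b, ∑ b', (U.1 (a, b) e * (starRingEnd ℂ) (U.1 (a', b) e) *
        (U.1 (a', b') e * (starRingEnd ℂ) (U.1 (a, b') e))).re ∂μ
      = ∑ a' : Fin dA, ∑ b : Fin dB, ∑ b' : Fin dB, lubP μ e e e / 2 *
        ((if a = a' then 1 else 0) + (if b = b' then 1 else 0)) := by
    intro a
    rw [integral_finsetSum]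
    swap
    · intro a' _
      refine integrable_finsetSum _ fun b _ => ?_
      exact integrable_finsetSum _ fun b' _ => hI (a, b) (a', b) (a', b') (a, b')
    refine Finset.sum_congr rfl fun a' _ => ?_
    rw [integral_finsetSum]
    swap
    · intro b _
      exact integrable_finsetSum _ fun b' _ => hI (a, b) (a', b) (a', b') (a, b')
    refine Finset.sum_congr rfl fun b _ => ?_
    rw [integral_finsetSum]
    swap
    · exact fun b' _ => hI (a, b) (a', b) (a', b') (a, b')
    exact Finset.sum_congr rfl fun b' _ => hV _ _ _ _
  simp only [hS, ← Finset.mul_sum]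
  have hN := lub_norm μ e
  simp only [Fintype.card_prod, Fintype.card_fin, Nat.cast_mul] at hN
  have hsum : (∑ a : Fin dA, ∑ a' : Fin dA, ∑ b : Fin dB, ∑ b' : Fin dB,
      ((if a = a' then (1 : ℝ) else 0) + (if b = b' then 1 else 0)))
      = (dA : ℝ) * dB * (dA + dB) := by
    simp [Finset.sum_add_distrib, ← Finset.mul_sum]
    ring
  rw [hsum, eq_div_iff (by positivity)]
  linear_combination ((dA : ℝ) + dB) * hN
end
end
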